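/- arXiv:2102.04397 — 6 statements merged into one kernel-verified Lean document; each statement's English description precedes it below -/
import Mathlib

section
/- There is at most one (c,ε)-cyclically invariant coupling: if π and π' are couplings of μ and ν that are both (c,ε)-cyclically invariant, then π = π'. -/
open MeasureTheory Filter Topology Set
open scoped ENNReal

noncomputable section

namespace EOT

variable {X Y : Type*}

/-- A coupling of `μ` and `ν`: a probability measure on the product with the given marginals. -/
def IsCoupling [MeasurableSpace X] [MeasurableSpace Y]
    (μ : Measure X) (ν : Measure Y) (π : Measure (X × Y)) : Prop :=
  IsProbabilityMeasure π ∧ π.map Prod.fst = μ ∧ π.map Prod.snd = ν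

/-- `(c,ε)`-cyclical invariance: `π` is equivalent to `P = μ ⊗ ν`, with a positive version of the
density satisfying the cyclical identity for all `k` points. -/
def IsCyclInvariant [MeasurableSpace X] [MeasurableSpace Y]
    (c : X → Y → ℝ) (ε : ℝ) (μ : Measure X) (ν : Measure Y)
    (π : Measure (X × Y)) : Prop :=
  IsCoupling μ ν π ∧
  ∃ D : X × Y → ℝ, Measurable D ∧ (∀ z, 0 < D z) ∧
    π = (μ.prod ν).withDensity (fun z => ENNReal.ofReal (D z)) ∧
    ∀ (k : ℕ) (x : Fin (k + 1) → X) (y : Fin (k + 1) → Y),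
      (∏ i, D (x i, y i)) =
        Real.exp (-(1 / ε) * ((∑ i, c (x i) (y i)) - ∑ i, c (x i) (y (i + 1)))) *
        ∏ i, D (x i, y (i + 1))

/-- Topological support of a measure. -/
def mSupport {Z : Type*} [TopologicalSpace Z] [MeasurableSpace Z] (π : Measure Z) : Set Z :=
  {z | ∀ U : Set Z, IsOpen U → z ∈ U → 0 < π U}

/-- Weak convergence `π ε → π₀` as `ε → 0⁺`, tested against bounded continuous functions. -/
def TendstoWeakly {Z : Type*} [TopologicalSpace Z] [MeasurableSpace Z]
    (π : ℝ → Measure Z) (π₀ : Measure Z) : Prop :=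
  ∀ f : BoundedContinuousFunction Z ℝ,
    Tendsto (fun ε => ∫ z, f z ∂(π ε)) (𝓝[>] (0 : ℝ)) (𝓝 (∫ z, f z ∂π₀))

/-- `c`-cyclical monotonicity of a set `Γ ⊆ X × Y`. -/
def CCyclMonotone (c : X → Y → ℝ) (Γ : Set (X × Y)) : Prop :=
  ∀ (k : ℕ) (p : Fin (k + 1) → X × Y), (∀ i, p i ∈ Γ) →
    (∑ i, c (p i).1 (p i).2) ≤ ∑ i, c (p i).1 (p (i + 1)).2

/-- The rate function `I(x,y)`: supremum over `k ≥ 2`, points `(x_i,y_i)_{i=2}^k ⊆ Γ`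
(the first point being `z`) and permutations `σ` of the cost difference. -/
def rateI (c : X → Y → ℝ) (Γ : Set (X × Y)) (z : X × Y) : EReal :=
  ⨆ (k : ℕ) (p : Fin (k + 2) → X × Y) (_ : p 0 = z) (_ : ∀ i, i ≠ 0 → p i ∈ Γ)
    (σ : Equiv.Perm (Fin (k + 2))),
    (((∑ i, c (p i).1 (p i).2) - ∑ i, c (p i).1 (p (σ i)).2 : ℝ) : EReal)

/-- The variant of the rate function using only the cyclic shift. -/
def rateICyc (c : X → Y → ℝ) (Γ : Set (X × Y)) (z : X × Y) : EReal :=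
  ⨆ (k : ℕ) (p : Fin (k + 2) → X × Y) (_ : p 0 = z) (_ : ∀ i, i ≠ 0 → p i ∈ Γ),
    (((∑ i, c (p i).1 (p i).2) - ∑ i, c (p i).1 (p (i + 1)).2 : ℝ) : EReal)

open scoped Classical in
/-- Relative entropy (Kullback–Leibler divergence) `H(π|R)`, valued in `EReal`. -/
def relEntropy {Z : Type*} [MeasurableSpace Z] (π R : Measure Z) : EReal :=
  if π ≪ R ∧ Integrable (fun z => Real.log (π.rnDeriv R z).toReal) π
  then ((∫ z, Real.log (π.rnDeriv R z).toReal ∂π : ℝ) : EReal)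
  else ⊤

/-- Transport cost `∫ c dπ` (as a lower integral). -/
def transportCost [MeasurableSpace X] [MeasurableSpace Y]
    (c : X → Y → ℝ) (π : Measure (X × Y)) : ℝ≥0∞ :=
  ∫⁻ z, ENNReal.ofReal (c z.1 z.2) ∂π

/-- Entropic optimal transport objective `∫ c dπ + ε H(π|μ⊗ν)`. -/
def eotObj [MeasurableSpace X] [MeasurableSpace Y]
    (c : X → Y → ℝ) (ε : ℝ) (μ : Measure X) (ν : Measure Y) (π : Measure (X × Y)) : EReal :=
  (transportCost c π : EReal) + (ε : EReal) * relEntropy π (μ.prod ν)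

/-- The `c`-conjugate `ψ^c(y) = inf_x [ψ(x) + c(x,y)]`. -/
def cConj (c : X → Y → ℝ) (ψ : X → EReal) (y : Y) : EReal :=
  ⨅ x, ψ x + (c x y : EReal)

/-- A proper `c`-convex function `ψ(x) = sup_y [ζ(y) − c(x,y)]`. -/
def IsCConvex (c : X → Y → ℝ) (ψ : X → EReal) : Prop :=
  (∀ x, ψ x ≠ ⊥) ∧ (∃ x, ψ x ≠ ⊤) ∧
  ∃ ζ : Y → EReal, ∀ x, ψ x = ⨆ y, ζ y - (c x y : EReal)

/-- The `c`-subdifferential `∂_c ψ = {(x,y) : ψ^c(y) − ψ(x) = c(x,y)}`. -/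
def cSubdiff (c : X → Y → ℝ) (ψ : X → EReal) : Set (X × Y) :=
  {p | cConj c ψ p.2 - ψ p.1 = (c p.1 p.2 : EReal)}

/-- A Kantorovich potential for `Γ`: a `c`-convex `ψ` with `Γ ⊆ ∂_c ψ`. -/
def IsKantorovichPotential (c : X → Y → ℝ) (Γ : Set (X × Y)) (ψ : X → EReal) : Prop :=
  IsCConvex c ψ ∧ Γ ⊆ cSubdiff c ψ

/-- Uniqueness of Kantorovich potentials on a set `Λ ⊆ X`. -/
def UniquenessOfPotentials (c : X → Y → ℝ) (Γ : Set (X × Y)) (Λ : Set X) : Prop :=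
  ∀ ψ₁ ψ₂ : X → EReal, IsKantorovichPotential c Γ ψ₁ → IsKantorovichPotential c Γ ψ₂ →
    ∀ x ∈ Λ, ∀ x' ∈ Λ, ψ₁ x - ψ₂ x = ψ₁ x' - ψ₂ x'

/-- The Rockafellar antiderivative `ψ_{(x₀,y₀)}` of `Γ`. -/
def rockafellar (c : X → Y → ℝ) (Γ : Set (X × Y)) (z₀ : X × Y) (x : X) : EReal :=
  ⨆ (k : ℕ) (p : Fin (k + 1) → X × Y) (_ : ∀ i, p i ∈ Γ),
    ((c z₀.1 z₀.2 - c (p 0).1 z₀.2 +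
        ∑ i : Fin (k + 1),
          (c (p i).1 (p i).2 -
            c (if h : (i : ℕ) + 1 < k + 1 then (p ⟨(i : ℕ) + 1, h⟩).1 else x) (p i).2) : ℝ) : EReal)

theorem cross_aux (c : X → Y → ℝ) (ε : ℝ) (D : X × Y → ℝ)
    (h : ∀ (k : ℕ) (x : Fin (k + 1) → X) (y : Fin (k + 1) → Y),
      (∏ i, D (x i, y i)) =
        Real.exp (-(1 / ε) * ((∑ i, c (x i) (y i)) - ∑ i, c (x i) (y (i + 1)))) *
        ∏ i, D (x i, y (i + 1))) (x₁ x₂ : X) (y₁ y₂ : Y) :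
    D (x₁, y₁) * D (x₂, y₂) =
      Real.exp (-(1 / ε) * ((c x₁ y₁ + c x₂ y₂) - (c x₁ y₂ + c x₂ y₁))) *
        (D (x₁, y₂) * D (x₂, y₁)) := by
  have := h 1 ![x₁, x₂] ![y₁, y₂]
  simpa [Fin.sum_univ_two, Fin.prod_univ_two] using this

section Statement

variable {X Y : Type*}
  [MeasurableSpace X] [TopologicalSpace X] [PolishSpace X] [BorelSpace X]
  [MeasurableSpace Y] [TopologicalSpace Y] [PolishSpace Y] [BorelSpace Y]

/-- there is at most one `(c,ε)`-cyclically invariant coupling. -/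
theorem stmt0 (μ : Measure X) (ν : Measure Y)
    [IsProbabilityMeasure μ] [IsProbabilityMeasure ν]
    (c : X → Y → ℝ) (hc : Measurable fun p : X × Y => c p.1 p.2) (hc0 : ∀ x y, 0 ≤ c x y)
    (ε : ℝ) (hε : 0 < ε) (π π' : Measure (X × Y))
    (hπ : IsCyclInvariant c ε μ ν π) (hπ' : IsCyclInvariant c ε μ ν π') :
    π = π' := by
  obtain ⟨⟨hp, h1, h2⟩, D, hDm, hD0, hD, hDc⟩ := hπ
  obtain ⟨⟨hp', h1', h2'⟩, D', hDm', hD0', hD', hDc'⟩ := hπ'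
  obtain ⟨x0⟩ : Nonempty X := nonempty_of_isProbabilityMeasure μ
  obtain ⟨y0⟩ : Nonempty Y := nonempty_of_isProbabilityMeasure ν
  -- the density ratio factorizes
  let a : X → ℝ := fun x => D' (x, y0) / D (x, y0)
  let b : Y → ℝ := fun y => D' (x0, y) / D (x0, y) / (D' (x0, y0) / D (x0, y0))
  have ha0 : ∀ x, 0 < a x := fun x => div_pos (hD0' _) (hD0 _)
  have hb0 : ∀ y, 0 < b y := fun y =>
    div_pos (div_pos (hD0' _) (hD0 _)) (div_pos (hD0' _) (hD0 _))
  have ham : Measurable a :=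
    (hDm'.comp (measurable_id.prodMk measurable_const)).div
      (hDm.comp (measurable_id.prodMk measurable_const))
  have hbm : Measurable b :=
    ((hDm'.comp (measurable_const.prodMk measurable_id)).div
      (hDm.comp (measurable_const.prodMk measurable_id))).div_const _
  have hfac : ∀ x y, D' (x, y) = D (x, y) * (a x * b y) := by
    intro x y
    have e := cross_aux c ε D hDc x x0 y y0
    have e' := cross_aux c ε D' hDc' x x0 y y0
    have hE := Real.exp_pos (-(1 / ε) * ((c x y + c x0 y0) - (c x y0 + c x0 y)))
    set E := Real.exp (-(1 / ε) * ((c x y + c x0 y0) - (c x y0 + c x0 y)))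
    have p1 := hD0 (x, y0)
    have p2 := hD0 (x0, y)
    have p3 := hD0 (x0, y0)
    have p4 := hD0' (x0, y0)
    have q : D' (x, y) = E * (D' (x, y0) * D' (x0, y)) / D' (x0, y0) := by
      rw [← e']; field_simp
    have q' : D (x, y) = E * (D (x, y0) * D (x0, y)) / D (x0, y0) := by
      rw [← e]; field_simp
    rw [q, q']
    simp only [a, b]
    field_simp
  let F : ℝ → ℝ := fun t => (t - 1) / (t + 1)
  have hFm : Measurable F := (measurable_id.sub_const 1).div (measurable_id.add_const 1)
  have hFb : ∀ t, 0 < t → ‖F t‖ ≤ 1 := by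
    intro t ht
    simp only [F, Real.norm_eq_abs, abs_le]
    constructor
    · rw [le_div_iff₀ (by linarith)]; linarith
    · rw [div_le_iff₀ (by linarith)]; linarith
  let f : X × Y → ℝ := fun z => F (a z.1) + F (b z.2)
  have hI1 : ∀ ρ : Measure (X × Y), IsProbabilityMeasure ρ →
      Integrable (fun z : X × Y => F (a z.1)) ρ := fun ρ _ =>
    Integrable.of_bound (hFm.comp (ham.comp measurable_fst)).aestronglyMeasurable 1
      (Eventually.of_forall fun z => hFb _ (ha0 _))
  have hI2 : ∀ ρ : Measure (X × Y), IsProbabilityMeasure ρ →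
      Integrable (fun z : X × Y => F (b z.2)) ρ := fun ρ _ =>
    Integrable.of_bound (hFm.comp (hbm.comp measurable_snd)).aestronglyMeasurable 1
      (Eventually.of_forall fun z => hFb _ (hb0 _))
  have hint : ∀ ρ : Measure (X × Y), IsProbabilityMeasure ρ → ρ.map Prod.fst = μ →
      ρ.map Prod.snd = ν → ∫ z, f z ∂ρ = (∫ x, F (a x) ∂μ) + ∫ y, F (b y) ∂ν := by
    intro ρ hρ e1 e2
    simp only [f]
    rw [integral_add (hI1 ρ hρ) (hI2 ρ hρ), ← e1, ← e2,
      integral_map (f := fun x => F (a x)) measurable_fst.aemeasurable (hFm.comp ham).aestronglyMeasurable,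
      integral_map (f := fun y => F (b y)) measurable_snd.aemeasurable (hFm.comp hbm).aestronglyMeasurable]
  have key : ∀ (ρ : Measure (X × Y)) (G : X × Y → ℝ), IsProbabilityMeasure ρ → Measurable G →
      (∀ z, 0 < G z) → ρ = (μ.prod ν).withDensity (fun z => ENNReal.ofReal (G z)) →
      Integrable (fun z => G z * f z) (μ.prod ν) ∧
        ∫ z, f z ∂ρ = ∫ z, G z * f z ∂(μ.prod ν) := by
    intro ρ G hρ hG hG0 e
    have hfi : Integrable f ρ := (hI1 ρ hρ).add (hI2 ρ hρ)
    have hs : ∀ z, (ENNReal.ofReal (G z)).toReal = G z :=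
      fun z => ENNReal.toReal_ofReal (hG0 z).le
    constructor
    · rw [e, integrable_withDensity_iff_integrable_smul' hG.ennreal_ofReal
        (Eventually.of_forall fun z => ENNReal.ofReal_lt_top)] at hfi
      simpa only [hs, smul_eq_mul] using hfi
    · rw [e, integral_withDensity_eq_integral_toReal_smul hG.ennreal_ofReal
        (Eventually.of_forall fun z => ENNReal.ofReal_lt_top)]
      simp only [hs, smul_eq_mul]
  obtain ⟨i1, j1⟩ := key π D hp hDm hD0 hD
  obtain ⟨i2, j2⟩ := key π' D' hp' hDm' hD0' hD'
  have hzero : ∫ z, (D' z * f z - D z * f z) ∂(μ.prod ν) = 0 := by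
    rw [integral_sub i2 i1, ← j1, ← j2, hint π hp h1 h2, hint π' hp' h1' h2', sub_self]
  have hform : ∀ z, D' z * f z - D z * f z =
      2 * D z * (a z.1 * b z.2 - 1) ^ 2 / ((a z.1 + 1) * (b z.2 + 1)) := by
    rintro ⟨x, y⟩
    have := ha0 x
    have := hb0 y
    simp only [f, F, hfac x y]
    field_simp
    ring
  have hnn : 0 ≤ fun z => D' z * f z - D z * f z := by
    intro z
    have := ha0 z.1
    have := hb0 z.2
    have := hD0 z
    show 0 ≤ D' z * f z - D z * f z
    rw [hform]
    positivity
  rw [integral_eq_zero_iff_of_nonneg hnn (i2.sub i1)] at hzero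
  rw [hD, hD']
  apply withDensity_congr_ae
  filter_upwards [hzero] with z hz
  have hz' : D' z * f z - D z * f z = 0 := hz
  rw [hform] at hz'
  have p1 := ha0 z.1
  have p2 := hb0 z.2
  have p3 := hD0 z
  have hab : a z.1 * b z.2 - 1 = 0 := by
    by_contra hne
    have : 0 < (a z.1 * b z.2 - 1) ^ 2 := by positivity
    have : 0 < 2 * D z * (a z.1 * b z.2 - 1) ^ 2 / ((a z.1 + 1) * (b z.2 + 1)) := by positivity
    linarith
  have := hfac z.1 z.2
  rw [sub_eq_zero.mp hab, mul_one] at this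
  rw [show D' z = D z from this]

end Statement

end EOT
end
end

section
/- Suppose there exists a coupling π ∈ Π(μ,ν) with ∫ c dπ + H(π|P) < ∞. Then a coupling π ∈ Π(μ,ν) is (c,ε)-cyclically invariant if and only if it minimizes π ↦ ∫ c dπ + ε H(π|P) over Π(μ,ν); moreover, there exists a unique such coupling. -/
open MeasureTheory Filter Topology Set
open scoped ENNReal

noncomputable section

namespace EOT

variable {X Y : Type*}

lemma mul_log_ge {x : ℝ} (hx : 0 ≤ x) : -1 ≤ x * Real.log x := by
  rcases hx.eq_or_lt with rfl | h
  · simp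
  · have := Real.one_sub_inv_le_log_of_pos h
    have h2 : x * (1 - x⁻¹) ≤ x * Real.log x := mul_le_mul_of_nonneg_left this hx
    have h3 : x * (1 - x⁻¹) = x - 1 := by field_simp
    linarith

/-- Gradient inequality for `x log x`. -/
lemma mul_log_sub_le {a b : ℝ} (ha : 0 < a) (hb : 0 ≤ b) :
    a * Real.log a - b * Real.log b ≤ (a - b) * (1 + Real.log a) := by
  rcases hb.eq_or_lt with rfl | h
  · simp; nlinarith
  · have h1 : Real.log (a / b) ≤ a / b - 1 := Real.log_le_sub_one_of_pos (by positivity)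
    rw [Real.log_div ha.ne' h.ne'] at h1
    have h2 : b * (Real.log a - Real.log b) ≤ b * (a / b - 1) :=
      mul_le_mul_of_nonneg_left h1 hb
    have h3 : b * (a / b - 1) = a - b := by field_simp
    nlinarith

lemma xlog_aux {x m : ℝ} (hx : 0 ≤ x) (hm : 0 < m) :
    2 * x - 2 * (√m * √x) ≤ x * Real.log x - x * Real.log m := by
  rcases hx.eq_or_lt with rfl | h
  · simp
  · have h1 : Real.log (√m / √x) ≤ √m / √x - 1 :=
      Real.log_le_sub_one_of_pos (by positivity)
    rw [Real.log_div (by positivity) (by positivity), Real.log_sqrt hm.le, Real.log_sqrt hx] at h1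
    have h2 : x * (Real.log m / 2 - Real.log x / 2) ≤ x * (√m / √x - 1) :=
      mul_le_mul_of_nonneg_left h1 hx
    have h3 : x * (√m / √x - 1) = √m * √x - x := by
      have : √x * √x = x := Real.mul_self_sqrt hx
      have hp : 0 < √x := by positivity
      calc x * (√m / √x - 1) = (√x * √x) * (√m / √x - 1) := by rw [this]
        _ = √m * √x - √x * √x := by field_simp
        _ = _ := by rw [this]
    linarith

/-- Strong midpoint convexity of `x log x` in Hellinger form. -/
lemma mul_log_mid {x y : ℝ} (hx : 0 ≤ x) (hy : 0 ≤ y) :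
    ((x + y) / 2) * Real.log ((x + y) / 2) + (1 / 4) * (√x - √y) ^ 2
      ≤ (x * Real.log x + y * Real.log y) / 2 := by
  rcases (add_nonneg hx hy).eq_or_lt with h | h
  · have h1 : x = 0 := by linarith
    have h2 : y = 0 := by linarith
    simp [h1, h2]
  · set m := (x + y) / 2 with hm
    have hmp : 0 < m := by positivity
    have a1 := xlog_aux hx hmp
    have a2 := xlog_aux hy hmp
    have e1 : √x * √x = x := Real.mul_self_sqrt hx
    have e2 : √y * √y = y := Real.mul_self_sqrt hy
    have e3 : √m * √m = m := Real.mul_self_sqrt hmp.le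
    have p1 := Real.sqrt_nonneg x
    have p2 := Real.sqrt_nonneg y
    have p3 : 0 < √m := by positivity
    have hxy : x + y = 2 * m := by rw [hm]; ring
    -- key: 2 m - √m s ≥ (1/4) (√x-√y)^2
    have key : (1 / 4) * (√x - √y) ^ 2 ≤ 2 * m - √m * (√x + √y) := by
      have : (√x - √y) ^ 2 + (√x + √y) ^ 2 = 4 * m := by nlinarith
      nlinarith [sq_nonneg (2 * √m - (√x + √y))]
    have e4 : x * Real.log m + y * Real.log m = 2 * (m * Real.log m) := by
      rw [← add_mul, hxy, mul_assoc]
    linarith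

section Gen

variable {Ω : Type*} [MeasurableSpace Ω] {P : Measure Ω} [IsProbabilityMeasure P]

lemma relEntropy_wd {Z : Ω → ℝ} (hZ : Measurable Z) (hZ0 : ∀ z, 0 ≤ Z z)
    (hi : Integrable (fun z => Z z * Real.log (Z z)) P) :
    relEntropy (P.withDensity fun z => ENNReal.ofReal (Z z)) P
      = ((∫ z, Z z * Real.log (Z z) ∂P : ℝ) : EReal) := by
  have hm : Measurable fun z => ENNReal.ofReal (Z z) := hZ.ennreal_ofReal
  have hac := withDensity_absolutelyContinuous P (fun z => ENNReal.ofReal (Z z))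
  have hrn : (fun z => Real.log (((P.withDensity fun z => ENNReal.ofReal (Z z)).rnDeriv P z).toReal))
      =ᵐ[P.withDensity fun z => ENNReal.ofReal (Z z)] fun z => Real.log (Z z) := by
    filter_upwards [hac.ae_eq (Measure.rnDeriv_withDensity P hm)] with z hz
    rw [hz, ENNReal.toReal_ofReal (hZ0 z)]
  have hlt : ∀ᵐ z ∂P, ENNReal.ofReal (Z z) < ∞ := ae_of_all _ fun _ => ENNReal.ofReal_lt_top
  rw [relEntropy, if_pos, integral_congr_ae hrn,
    integral_withDensity_eq_integral_toReal_smul hm hlt]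
  · simp [ENNReal.toReal_ofReal (hZ0 _)]
  · refine ⟨hac, ?_⟩
    rw [integrable_congr hrn, integrable_withDensity_iff_integrable_smul' hm hlt]
    simpa [ENNReal.toReal_ofReal (hZ0 _)] using hi

lemma relEntropy_ne_top {π : Measure Ω} [IsFiniteMeasure π] (h : relEntropy π P ≠ ⊤) :
    ∃ Z : Ω → ℝ, Measurable Z ∧ (∀ z, 0 ≤ Z z) ∧
      π = P.withDensity (fun z => ENNReal.ofReal (Z z)) ∧
      Integrable (fun z => Z z * Real.log (Z z)) P := by
  rw [relEntropy] at h
  split_ifs at h with hh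
  · obtain ⟨hac, hi⟩ := hh
    refine ⟨fun z => (π.rnDeriv P z).toReal, (Measure.measurable_rnDeriv π P).ennreal_toReal,
      fun z => ENNReal.toReal_nonneg, ?_, ?_⟩
    · rw [← Measure.withDensity_rnDeriv_eq _ _ hac]
      refine withDensity_congr_ae ?_
      rw [Measure.withDensity_rnDeriv_eq _ _ hac]
      filter_upwards [Measure.rnDeriv_lt_top π P] with z hz
      rw [ENNReal.ofReal_toReal hz.ne]
    · have := (integrable_rnDeriv_smul_iff hac (f := fun z => Real.log (π.rnDeriv P z).toReal)).2 hi
      simpa using this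
  · exact absurd rfl h

end Gen

lemma relEntropy_ne_bot {Ω : Type*} [MeasurableSpace Ω] (π P : Measure Ω) : relEntropy π P ≠ ⊥ := by
  rw [relEntropy]; split_ifs <;> simp


section Dens

variable [MeasurableSpace X] [MeasurableSpace Y]

/-- Feasible densities. -/
structure Feas (c : X → Y → ℝ) (μ : Measure X) (ν : Measure Y) (Z : X × Y → ℝ) : Prop where
  meas : Measurable Z
  nonneg : ∀ z, 0 ≤ Z z
  cpl : IsCoupling μ ν ((μ.prod ν).withDensity fun z => ENNReal.ofReal (Z z))
  intc : Integrable (fun z => c z.1 z.2 * Z z) (μ.prod ν)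
  inte : Integrable (fun z => Z z * Real.log (Z z)) (μ.prod ν)

/-- Objective in terms of densities. -/
def J (c : X → Y → ℝ) (ε : ℝ) (μ : Measure X) (ν : Measure Y) (Z : X × Y → ℝ) : ℝ :=
  ∫ z, c z.1 z.2 * Z z ∂(μ.prod ν) + ε * ∫ z, Z z * Real.log (Z z) ∂(μ.prod ν)

variable {μ : Measure X} {ν : Measure Y} [IsProbabilityMeasure μ] [IsProbabilityMeasure ν]
  {c : X → Y → ℝ} {ε : ℝ}

lemma wd_apply {Ω : Type*} [MeasurableSpace Ω] {P : Measure Ω} {Z : Ω → ℝ}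
    (hZ0 : ∀ z, 0 ≤ Z z) (hi : Integrable Z P) {S : Set Ω} (hS : MeasurableSet S) :
    P.withDensity (fun z => ENNReal.ofReal (Z z)) S = ENNReal.ofReal (∫ z in S, Z z ∂P) := by
  rw [withDensity_apply _ hS, ofReal_integral_eq_lintegral_ofReal hi.integrableOn
    (ae_of_all _ hZ0)]

lemma coupling_iff {Z : X × Y → ℝ} (hZ : Measurable Z) (hZ0 : ∀ z, 0 ≤ Z z) :
    IsCoupling μ ν ((μ.prod ν).withDensity fun z => ENNReal.ofReal (Z z)) ↔
      Integrable Z (μ.prod ν) ∧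
      (∀ A : Set X, MeasurableSet A → ∫ z in Prod.fst ⁻¹' A, Z z ∂(μ.prod ν) = μ.real A) ∧
      (∀ B : Set Y, MeasurableSet B → ∫ z in Prod.snd ⁻¹' B, Z z ∂(μ.prod ν) = ν.real B) := by
  constructor
  · rintro ⟨h1, h2, h3⟩
    have hi : Integrable Z (μ.prod ν) := by
      refine ⟨hZ.aestronglyMeasurable, ?_⟩
      rw [hasFiniteIntegral_iff_ofReal (ae_of_all _ hZ0)]
      have := h1.measure_univ
      rw [withDensity_apply _ MeasurableSet.univ, Measure.restrict_univ] at this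
      rw [this]; exact ENNReal.one_lt_top
    refine ⟨hi, fun A hA => ?_, fun B hB => ?_⟩
    · have h := congrArg (fun m => m A) h2
      simp only [Measure.map_apply measurable_fst hA] at h
      rw [wd_apply hZ0 hi (measurable_fst hA)] at h
      rw [Measure.real, ← h, ENNReal.toReal_ofReal (integral_nonneg hZ0)]
    · have h := congrArg (fun m => m B) h3
      simp only [Measure.map_apply measurable_snd hB] at h
      rw [wd_apply hZ0 hi (measurable_snd hB)] at h
      rw [Measure.real, ← h, ENNReal.toReal_ofReal (integral_nonneg hZ0)]
  · rintro ⟨hi, h2, h3⟩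
    refine ⟨⟨?_⟩, ?_, ?_⟩
    · have := h2 univ MeasurableSet.univ
      rw [wd_apply hZ0 hi MeasurableSet.univ]
      simp only [preimage_univ] at this
      rw [this]; simp
    · ext A hA
      rw [Measure.map_apply measurable_fst hA, wd_apply hZ0 hi (measurable_fst hA), h2 A hA,
        ofReal_measureReal]
    · ext B hB
      rw [Measure.map_apply measurable_snd hB, wd_apply hZ0 hi (measurable_snd hB), h3 B hB,
        ofReal_measureReal]

lemma Feas.integrable {Z : X × Y → ℝ} (h : Feas c μ ν Z) : Integrable Z (μ.prod ν) :=
  ((coupling_iff h.meas h.nonneg).1 h.cpl).1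

lemma eotObj_wd (hc : Measurable fun p : X × Y => c p.1 p.2) (hc0 : ∀ x y, 0 ≤ c x y)
    {Z : X × Y → ℝ} (h : Feas c μ ν Z) :
    eotObj c ε μ ν ((μ.prod ν).withDensity fun z => ENNReal.ofReal (Z z))
      = ((J c ε μ ν Z : ℝ) : EReal) := by
  have ht : transportCost c ((μ.prod ν).withDensity fun z => ENNReal.ofReal (Z z))
      = ENNReal.ofReal (∫ z, c z.1 z.2 * Z z ∂(μ.prod ν)) := by
    rw [transportCost, lintegral_withDensity_eq_lintegral_mul _ h.meas.ennreal_ofReal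
      hc.ennreal_ofReal, ofReal_integral_eq_lintegral_ofReal h.intc
      (ae_of_all _ fun z => mul_nonneg (hc0 _ _) (h.nonneg z))]
    refine lintegral_congr fun z => ?_
    simp only [Pi.mul_apply]
    rw [mul_comm, ENNReal.ofReal_mul (hc0 _ _)]
  rw [eotObj, ht, relEntropy_wd h.meas h.nonneg h.inte, J, EReal.coe_ennreal_ofReal,
    max_eq_left (integral_nonneg fun z => mul_nonneg (hc0 _ _) (h.nonneg z))]
  push_cast
  rfl

lemma feas_of_ne_top (hc : Measurable fun p : X × Y => c p.1 p.2) (hc0 : ∀ x y, 0 ≤ c x y)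
    {π : Measure (X × Y)} (hπ : IsCoupling μ ν π) (h1 : transportCost c π ≠ ⊤)
    (h2 : relEntropy π (μ.prod ν) ≠ ⊤) :
    ∃ Z, Feas c μ ν Z ∧ π = (μ.prod ν).withDensity fun z => ENNReal.ofReal (Z z) := by
  have := hπ.1
  obtain ⟨Z, hZ, hZ0, rfl, hi⟩ := relEntropy_ne_top h2
  refine ⟨Z, ⟨hZ, hZ0, hπ, ?_, hi⟩, rfl⟩
  refine ⟨(hc.mul hZ).aestronglyMeasurable, ?_⟩
  rw [hasFiniteIntegral_iff_ofReal (ae_of_all _ fun z => mul_nonneg (hc0 _ _) (hZ0 z))]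
  rw [transportCost, lintegral_withDensity_eq_lintegral_mul _ hZ.ennreal_ofReal
      hc.ennreal_ofReal] at h1
  refine lt_of_le_of_ne le_top ?_
  convert h1 using 4 with z
  simp only [Pi.mul_apply]
  rw [mul_comm, ENNReal.ofReal_mul (hZ0 _)]

lemma ne_top_of_add_ne_top {a : ℝ≥0∞} {b : EReal} {r : ℝ} (hr : 0 < r) (hb : b ≠ ⊥)
    (h : (a : EReal) + (r : EReal) * b ≠ ⊤) : a ≠ ⊤ ∧ b ≠ ⊤ := by
  constructor
  · rintro rfl
    apply h
    rw [EReal.coe_ennreal_top]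
    induction b with
    | bot => exact absurd rfl hb
    | top => rw [EReal.coe_mul_top_of_pos hr]; rfl
    | coe b => rw [← EReal.coe_mul]; exact EReal.top_add_coe _
  · rintro rfl
    apply h
    rw [EReal.coe_mul_top_of_pos hr]
    exact EReal.add_top_of_ne_bot (EReal.coe_ennreal_ne_bot a)

end Dens

section Exist

lemma fatou_le {Ω : Type*} [MeasurableSpace Ω] {P : Measure Ω} {G : ℕ → Ω → ℝ≥0∞} {g : Ω → ℝ≥0∞}
    (hG : ∀ n, Measurable (G n)) (hlim : ∀ᵐ z ∂P, Tendsto (fun n => G n z) atTop (𝓝 (g z)))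
    {u : ℕ → ℝ≥0∞} {a : ℝ≥0∞} (hu : ∀ n, ∫⁻ z, G n z ∂P ≤ u n) (ha : Tendsto u atTop (𝓝 a)) :
    ∫⁻ z, g z ∂P ≤ a := by
  calc ∫⁻ z, g z ∂P = ∫⁻ z, liminf (fun n => G n z) atTop ∂P :=
        lintegral_congr_ae (hlim.mono fun z hz => hz.liminf_eq.symm)
    _ ≤ liminf (fun n => ∫⁻ z, G n z ∂P) atTop := lintegral_liminf_le hG
    _ ≤ liminf u atTop := liminf_le_liminf (Eventually.of_forall hu)
    _ = a := ha.liminf_eq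

lemma eLpNorm_two_eq {Ω : Type*} [MeasurableSpace Ω] {P : Measure Ω} {f : Ω → ℝ}
    (hf : MemLp f 2 P) : eLpNorm f 2 P = ENNReal.ofReal (√(∫ z, f z ^ 2 ∂P)) := by
  rw [hf.eLpNorm_eq_integral_rpow_norm (by simp) (by simp)]
  simp [Real.sqrt_eq_rpow]

variable [MeasurableSpace X] [MeasurableSpace Y]
  {μ : Measure X} {ν : Measure Y} [IsProbabilityMeasure μ] [IsProbabilityMeasure ν]
  {c : X → Y → ℝ} {ε : ℝ}

lemma sqrt_sub_sq_le {x y : ℝ} (hx : 0 ≤ x) (hy : 0 ≤ y) : (√x - √y) ^ 2 ≤ x + y := by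
  nlinarith [Real.mul_self_sqrt hx, Real.mul_self_sqrt hy,
    mul_nonneg (Real.sqrt_nonneg x) (Real.sqrt_nonneg y)]

lemma int_sqrt_sub {Z W : X × Y → ℝ} (hZ : Feas c μ ν Z) (hW : Feas c μ ν W) :
    Integrable (fun z => (√(Z z) - √(W z)) ^ 2) (μ.prod ν) := by
  refine (hZ.integrable.add hW.integrable).mono'
    ((hZ.meas.sqrt.sub hW.meas.sqrt).pow_const 2).aestronglyMeasurable (ae_of_all _ fun z => ?_)
  rw [Real.norm_of_nonneg (sq_nonneg _)]
  exact sqrt_sub_sq_le (hZ.nonneg z) (hW.nonneg z)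

lemma feas_mid {Z W : X × Y → ℝ} (hZ : Feas c μ ν Z) (hW : Feas c μ ν W) :
    Feas c μ ν (fun z => (Z z + W z) / 2) := by
  have hm : Measurable (fun z => (Z z + W z) / 2) := (hZ.meas.add hW.meas).div_const 2
  have h0 : ∀ z, 0 ≤ (Z z + W z) / 2 := fun z => by
    have := hZ.nonneg z; have := hW.nonneg z; positivity
  refine ⟨hm, h0, ?_, ?_, ?_⟩
  · obtain ⟨i1, a1, b1⟩ := (coupling_iff hZ.meas hZ.nonneg).1 hZ.cpl
    obtain ⟨i2, a2, b2⟩ := (coupling_iff hW.meas hW.nonneg).1 hW.cpl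
    refine (coupling_iff hm h0).2 ⟨(i1.add i2).div_const 2, fun A hA => ?_, fun B hB => ?_⟩
    · rw [integral_div, integral_add i1.integrableOn i2.integrableOn, a1 A hA, a2 A hA]; ring
    · rw [integral_div, integral_add i1.integrableOn i2.integrableOn, b1 B hB, b2 B hB]; ring
  · refine ((hZ.intc.add hW.intc).div_const 2).congr (ae_of_all _ fun z => ?_)
    simp only [Pi.add_apply]; ring
  · refine ((hZ.inte.norm.add hW.inte.norm).add (integrable_const (1 : ℝ))).mono'
      (hm.mul hm.log).aestronglyMeasurable (ae_of_all _ fun z => ?_)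
    have h1 := mul_log_ge (h0 z)
    have h2 := mul_log_mid (hZ.nonneg z) (hW.nonneg z)
    have h3 := sq_nonneg (√(Z z) - √(W z))
    simp only [Pi.add_apply, Real.norm_eq_abs]
    have h4 := le_abs_self (Z z * Real.log (Z z))
    have h5 := le_abs_self (W z * Real.log (W z))
    have h6 := abs_nonneg (Z z * Real.log (Z z))
    have h7 := abs_nonneg (W z * Real.log (W z))
    rw [abs_le]; constructor <;> linarith

lemma J_mid (hε : 0 < ε) {Z W : X × Y → ℝ} (hZ : Feas c μ ν Z) (hW : Feas c μ ν W) :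
    J c ε μ ν (fun z => (Z z + W z) / 2)
      + ε / 4 * ∫ z, (√(Z z) - √(W z)) ^ 2 ∂(μ.prod ν) ≤ (J c ε μ ν Z + J c ε μ ν W) / 2 := by
  have hM := feas_mid hZ hW
  have e1 : ∫ z, c z.1 z.2 * ((Z z + W z) / 2) ∂(μ.prod ν)
      = (∫ z, c z.1 z.2 * Z z ∂(μ.prod ν) + ∫ z, c z.1 z.2 * W z ∂(μ.prod ν)) / 2 := by
    rw [← integral_add hZ.intc hW.intc, ← integral_div]
    congr 1; ext z; ring
  have e2 : ∫ z, ((Z z + W z) / 2) * Real.log ((Z z + W z) / 2) ∂(μ.prod ν)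
      + 1 / 4 * ∫ z, (√(Z z) - √(W z)) ^ 2 ∂(μ.prod ν)
      ≤ (∫ z, Z z * Real.log (Z z) ∂(μ.prod ν) + ∫ z, W z * Real.log (W z) ∂(μ.prod ν)) / 2 := by
    rw [← integral_add hZ.inte hW.inte, ← integral_div, ← integral_const_mul,
      ← integral_add hM.inte ((int_sqrt_sub hZ hW).const_mul _)]
    refine integral_mono (hM.inte.add ((int_sqrt_sub hZ hW).const_mul _))
      ((hZ.inte.add hW.inte).div_const 2) fun z => ?_
    exact mul_log_mid (hZ.nonneg z) (hW.nonneg z)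
  simp only [J]
  rw [e1]
  nlinarith [mul_le_mul_of_nonneg_left e2 hε.le]

lemma J_ge (hc0 : ∀ x y, 0 ≤ c x y) (hε : 0 < ε) {Z : X × Y → ℝ} (hZ : Feas c μ ν Z) :
    -ε ≤ J c ε μ ν Z := by
  have h1 : 0 ≤ ∫ z, c z.1 z.2 * Z z ∂(μ.prod ν) :=
    integral_nonneg fun z => mul_nonneg (hc0 _ _) (hZ.nonneg z)
  have h2 : ∫ _z, (-1 : ℝ) ∂(μ.prod ν) ≤ ∫ z, Z z * Real.log (Z z) ∂(μ.prod ν) :=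
    integral_mono (integrable_const _) hZ.inte fun z => mul_log_ge (hZ.nonneg z)
  simp at h2
  simp only [J]
  nlinarith

lemma exists_min (hc : Measurable fun p : X × Y => c p.1 p.2) (hc0 : ∀ x y, 0 ≤ c x y)
    (hε : 0 < ε) (hne : ∃ Z, Feas c μ ν Z) :
    ∃ Z, Feas c μ ν Z ∧ ∀ W, Feas c μ ν W → J c ε μ ν Z ≤ J c ε μ ν W := by
  set m := sInf (J c ε μ ν '' {Z | Feas c μ ν Z}) with hm
  have hbdd : BddBelow (J c ε μ ν '' {Z | Feas c μ ν Z}) := by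
    refine ⟨-ε, ?_⟩
    rintro _ ⟨Z, hZ, rfl⟩
    exact J_ge hc0 hε hZ
  have hmle : ∀ W, Feas c μ ν W → m ≤ J c ε μ ν W := fun W hW => csInf_le hbdd ⟨W, hW, rfl⟩
  have hseq : ∀ n : ℕ, ∃ Z, Feas c μ ν Z ∧ J c ε μ ν Z < m + ε / 8 * (1 / 4) ^ n := by
    intro n
    obtain ⟨Z0, hZ0⟩ := hne
    obtain ⟨_, ⟨Z, hZ, rfl⟩, hlt⟩ := exists_lt_of_csInf_lt (s := J c ε μ ν '' {Z | Feas c μ ν Z})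
      ⟨_, Z0, hZ0, rfl⟩ (show sInf _ < m + ε / 8 * (1 / 4) ^ n by
        have : 0 < ε / 8 * (1 / 4 : ℝ) ^ n := by positivity
        linarith)
    exact ⟨Z, hZ, hlt⟩
  choose Zs hF hJ using hseq
  have hL2 : ∀ n, MemLp (fun z => √(Zs n z)) 2 (μ.prod ν) := fun n => by
    rw [memLp_two_iff_integrable_sq (hF n).meas.sqrt.aestronglyMeasurable]
    refine (hF n).integrable.congr (ae_of_all _ fun z => ?_)
    exact (Real.sq_sqrt ((hF n).nonneg z)).symm
  have hcau : ∀ N n k : ℕ, N ≤ n → N ≤ k →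
      eLpNorm ((fun z => √(Zs n z)) - (fun z => √(Zs k z))) 2 (μ.prod ν)
        < ENNReal.ofReal ((1 / 2) ^ N) := by
    intro N n k hn hk
    rw [eLpNorm_two_eq ((hL2 n).sub (hL2 k)), ENNReal.ofReal_lt_ofReal_iff (by positivity)]
    rw [Real.sqrt_lt' (by positivity)]
    have h1 := J_mid hε (hF n) (hF k)
    have h2 := hmle _ (feas_mid (hF n) (hF k))
    have h3 := hJ n
    have h4 := hJ k
    have h5 : (1 / 4 : ℝ) ^ n ≤ (1 / 4) ^ N :=
      pow_le_pow_of_le_one (by norm_num) (by norm_num) hn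
    have h6 : (1 / 4 : ℝ) ^ k ≤ (1 / 4) ^ N :=
      pow_le_pow_of_le_one (by norm_num) (by norm_num) hk
    have h7 : ((1 / 2 : ℝ) ^ N) ^ 2 = (1 / 4) ^ N := by
      rw [← pow_mul, mul_comm, pow_mul]; norm_num
    rw [h7]
    simp only [Pi.sub_apply]
    have h8 := mul_le_mul_of_nonneg_left h5 hε.le
    have h9 := mul_le_mul_of_nonneg_left h6 hε.le
    have h10 : (0 : ℝ) < (1 / 4) ^ N := by positivity
    have h11 : ε * ∫ z, (√(Zs n z) - √(Zs k z)) ^ 2 ∂(μ.prod ν) < ε * (1 / 4) ^ N := by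
      nlinarith [mul_pos hε h10]
    exact lt_of_mul_lt_mul_left h11 hε.le
  obtain ⟨f, hf, hft⟩ := Lp.cauchy_complete_eLpNorm (by norm_num) hL2 (B := fun N =>
    ENNReal.ofReal ((1 / 2) ^ N)) (by
      have hs : Summable fun N : ℕ => ((1 / 2 : ℝ)) ^ N := summable_geometric_two
      rw [← ENNReal.ofReal_tsum_of_nonneg (fun n => by positivity) hs]
      exact ENNReal.ofReal_ne_top) hcau
  obtain ⟨g, hg, hfg⟩ := hf.1
  have hgm : Measurable g := hg.measurable
  obtain ⟨ns, hns, hae⟩ := (tendstoInMeasure_of_tendsto_eLpNorm (by norm_num)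
    (fun n => (hL2 n).1) hf.1 hft).exists_seq_tendsto_ae
  have hZae : ∀ᵐ z ∂(μ.prod ν), Tendsto (fun k => Zs (ns k) z) atTop (𝓝 (g z ^ 2)) := by
    filter_upwards [hae, hfg] with z hz hz2
    rw [← hz2]
    refine (hz.pow 2).congr fun k => ?_
    exact Real.sq_sqrt ((hF _).nonneg z)
  have hZm : Measurable fun z => g z ^ 2 := hgm.pow_const 2
  have hZ0 : ∀ z, 0 ≤ g z ^ 2 := fun z => sq_nonneg _
  -- lower semicontinuity
  have hlsc : ∫⁻ z, ENNReal.ofReal (c z.1 z.2 * g z ^ 2 + ε * (g z ^ 2 * Real.log (g z ^ 2) + 1))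
      ∂(μ.prod ν) ≤ ENNReal.ofReal (m + ε) := by
    refine fatou_le (G := fun k z => ENNReal.ofReal (c z.1 z.2 * Zs (ns k) z
      + ε * (Zs (ns k) z * Real.log (Zs (ns k) z) + 1)))
      (u := fun k => ENNReal.ofReal (m + ε / 8 * (1 / 4) ^ (ns k) + ε)) ?_ ?_ ?_ ?_
    · intro k
      have := (hF (ns k)).meas
      exact ((hc.mul this).add (((this.mul this.log).add_const 1).const_mul ε)).ennreal_ofReal
    · filter_upwards [hZae] with z hz
      refine ENNReal.tendsto_ofReal ((hz.const_mul _).add (((Tendsto.add_const 1 ?_).const_mul ε)))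
      exact (Real.continuous_mul_log.tendsto _).comp hz
    · intro k
      have hk := hF (ns k)
      rw [← ofReal_integral_eq_lintegral_ofReal]
      · refine ENNReal.ofReal_le_ofReal ?_
        have hki : Integrable (fun z => ε * (Zs (ns k) z * Real.log (Zs (ns k) z) + 1))
          (μ.prod ν) := (hk.inte.add (integrable_const 1)).const_mul ε
        rw [integral_add hk.intc hki,
          integral_const_mul, integral_add hk.inte (integrable_const 1)]
        have := hJ (ns k)
        simp only [J] at this
        rw [integral_const, probReal_univ, one_smul]
        linarith
      · exact hk.intc.add ((hk.inte.add (integrable_const 1)).const_mul ε)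
      · refine ae_of_all _ fun z => ?_
        have h1 := mul_log_ge (hk.nonneg z)
        have h2 := mul_nonneg (hc0 z.1 z.2) (hk.nonneg z)
        have h3 : 0 ≤ ε * (Zs (ns k) z * Real.log (Zs (ns k) z) + 1) :=
          mul_nonneg hε.le (by linarith)
        exact add_nonneg h2 h3
    · refine ENNReal.tendsto_ofReal ?_
      have h1 : Tendsto (fun k => (1 / 4 : ℝ) ^ (ns k)) atTop (𝓝 0) :=
        (tendsto_pow_atTop_nhds_zero_of_lt_one (by norm_num) (by norm_num)).comp hns.tendsto_atTop
      simpa using ((h1.const_mul (ε / 8)).const_add m).add_const ε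
  have hp1 : ∀ z, 0 ≤ c z.1 z.2 * g z ^ 2 := fun z => mul_nonneg (hc0 z.1 z.2) (hZ0 z)
  have hp2 : ∀ z, 0 ≤ g z ^ 2 * Real.log (g z ^ 2) + 1 := fun z => by
    have := mul_log_ge (hZ0 z); linarith
  have hmm : Measurable fun z => c z.1 z.2 * g z ^ 2 := hc.mul hZm
  have hmm2 : Measurable fun z => g z ^ 2 * Real.log (g z ^ 2) := hZm.mul hZm.log
  have hIntg : Integrable (fun z => c z.1 z.2 * g z ^ 2
      + ε * (g z ^ 2 * Real.log (g z ^ 2) + 1)) (μ.prod ν) := by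
    refine ⟨(hmm.add ((hmm2.add_const 1).const_mul ε)).aestronglyMeasurable, ?_⟩
    rw [hasFiniteIntegral_iff_ofReal (ae_of_all _ fun z =>
      add_nonneg (hp1 z) (mul_nonneg hε.le (hp2 z)))]
    exact hlsc.trans_lt ENNReal.ofReal_lt_top
  have hintc : Integrable (fun z => c z.1 z.2 * g z ^ 2) (μ.prod ν) := by
    refine hIntg.mono' hmm.aestronglyMeasurable (ae_of_all _ fun z => ?_)
    rw [Real.norm_of_nonneg (hp1 z)]
    linarith [mul_nonneg hε.le (hp2 z)]
  have hinte' : Integrable (fun z => ε * (g z ^ 2 * Real.log (g z ^ 2) + 1)) (μ.prod ν) := by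
    refine hIntg.mono' ((hmm2.add_const 1).const_mul ε).aestronglyMeasurable
      (ae_of_all _ fun z => ?_)
    rw [Real.norm_of_nonneg (mul_nonneg hε.le (hp2 z))]
    linarith [hp1 z]
  have hinte : Integrable (fun z => g z ^ 2 * Real.log (g z ^ 2)) (μ.prod ν) := by
    refine ((hinte'.const_mul ε⁻¹).sub (integrable_const 1)).congr (ae_of_all _ fun z => ?_)
    simp only [Pi.sub_apply]
    field_simp
    ring
  -- mass
  have hgL : MemLp g 2 (μ.prod ν) := (memLp_congr_ae hfg).1 hf
  have hmass : 1 ≤ ∫ z, g z ^ 2 ∂(μ.prod ν) := by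
    have h1 : ∀ n, (1 : ℝ≥0∞) ≤ eLpNorm ((fun z => √(Zs n z)) - f) 2 (μ.prod ν)
        + eLpNorm g 2 (μ.prod ν) := by
      intro n
      have e1 : eLpNorm (fun z => √(Zs n z)) 2 (μ.prod ν) = 1 := by
        rw [eLpNorm_two_eq (hL2 n)]
        have h2 := ((coupling_iff (hF n).meas (hF n).nonneg).1 (hF n).cpl).2.1 univ
          MeasurableSet.univ
        simp only [preimage_univ, Measure.restrict_univ, probReal_univ] at h2
        simp_rw [Real.sq_sqrt ((hF n).nonneg _)]
        rw [h2]; simp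
      rw [← e1, ← eLpNorm_congr_ae hfg]
      have := eLpNorm_add_le (((hL2 n).sub hf).1) hf.1 (p := 2) (by norm_num)
      simpa using this
    have h2 : Tendsto (fun n => eLpNorm ((fun z => √(Zs n z)) - f) 2 (μ.prod ν)
        + eLpNorm g 2 (μ.prod ν)) atTop (𝓝 (0 + eLpNorm g 2 (μ.prod ν))) :=
      hft.add tendsto_const_nhds
    have h3 := ge_of_tendsto' h2 h1
    rw [zero_add, eLpNorm_two_eq hgL, ENNReal.one_le_ofReal, Real.one_le_sqrt] at h3
    exact h3
  have hgi : Integrable (fun z => g z ^ 2) (μ.prod ν) := hgL.integrable_sq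
  have hset : ∀ S : Set (X × Y), MeasurableSet S → ∀ a : ℝ≥0∞,
      (∀ n, (μ.prod ν).withDensity (fun z => ENNReal.ofReal (Zs n z)) S = a) →
      (μ.prod ν).withDensity (fun z => ENNReal.ofReal (g z ^ 2)) S ≤ a := by
    intro S hS a ha
    rw [withDensity_apply _ hS]
    refine fatou_le (G := fun k z => ENNReal.ofReal (Zs (ns k) z)) (u := fun _ => a)
      (fun k => (hF _).meas.ennreal_ofReal) ?_ ?_ tendsto_const_nhds
    · refine ae_restrict_of_ae ?_
      filter_upwards [hZae] with z hz
      exact ENNReal.tendsto_ofReal hz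
    · intro k
      rw [← withDensity_apply _ hS, ha]
  have huniv : 1 ≤ (μ.prod ν).withDensity (fun z => ENNReal.ofReal (g z ^ 2)) univ := by
    rw [wd_apply hZ0 hgi MeasurableSet.univ, Measure.restrict_univ, ENNReal.one_le_ofReal]
    exact hmass
  have hcpl : IsCoupling μ ν ((μ.prod ν).withDensity fun z => ENNReal.ofReal (g z ^ 2)) := by
    have hu1 : (μ.prod ν).withDensity (fun z => ENNReal.ofReal (g z ^ 2)) univ = 1 :=
      le_antisymm (hset univ MeasurableSet.univ 1 fun n => (hF n).cpl.1.measure_univ) huniv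
    have hpr : IsProbabilityMeasure
      ((μ.prod ν).withDensity fun z => ENNReal.ofReal (g z ^ 2)) := ⟨hu1⟩
    refine ⟨hpr, ?_, ?_⟩
    · have := Measure.isProbabilityMeasure_map (μ := (μ.prod ν).withDensity
        fun z => ENNReal.ofReal (g z ^ 2)) (measurable_fst (α := X) (β := Y)).aemeasurable
      refine Measure.eq_of_le_of_isProbabilityMeasure (Measure.le_intro fun A hA _ => ?_)
      rw [Measure.map_apply measurable_fst hA]
      refine hset _ (measurable_fst hA) _ fun n => ?_
      rw [← Measure.map_apply measurable_fst hA, (hF n).cpl.2.1]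
    · have := Measure.isProbabilityMeasure_map (μ := (μ.prod ν).withDensity
        fun z => ENNReal.ofReal (g z ^ 2)) (measurable_snd (α := X) (β := Y)).aemeasurable
      refine Measure.eq_of_le_of_isProbabilityMeasure (Measure.le_intro fun A hA _ => ?_)
      rw [Measure.map_apply measurable_snd hA]
      refine hset _ (measurable_snd hA) _ fun n => ?_
      rw [← Measure.map_apply measurable_snd hA, (hF n).cpl.2.2]
  refine ⟨fun z => g z ^ 2, ⟨hZm, hZ0, hcpl, hintc, hinte⟩, fun W hW => le_trans ?_ (hmle W hW)⟩
  rw [← ofReal_integral_eq_lintegral_ofReal hIntg (ae_of_all _ fun z =>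
      add_nonneg (hp1 z) (mul_nonneg hε.le (hp2 z))), integral_add hintc hinte',
      integral_const_mul, integral_add hinte (integrable_const 1)] at hlsc
  have hme : 0 ≤ m + ε := by
    have : -ε ≤ m := by
      obtain ⟨Z0, hZ0⟩ := hne
      refine le_csInf ⟨_, Z0, hZ0, rfl⟩ ?_
      rintro _ ⟨Z, hZ, rfl⟩
      exact J_ge hc0 hε hZ
    linarith
  rw [ENNReal.ofReal_le_ofReal_iff hme] at hlsc
  simp at hlsc
  simp only [J]
  simp
  linarith

end Exist

section Uniq

variable [MeasurableSpace X] [MeasurableSpace Y]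
  {μ : Measure X} {ν : Measure Y} [IsProbabilityMeasure μ] [IsProbabilityMeasure ν]
  {c : X → Y → ℝ} {ε : ℝ}

lemma exists_factor (hc : Measurable fun p : X × Y => c p.1 p.2) {π : Measure (X × Y)}
    (h : IsCyclInvariant c ε μ ν π) :
    ∃ (f : X → ℝ) (g : Y → ℝ), Measurable f ∧ Measurable g ∧
      π = (μ.prod ν).withDensity
        (fun z => ENNReal.ofReal (Real.exp (f z.1 + g z.2 - (1 / ε) * c z.1 z.2))) := by
  obtain ⟨-, D, hD, hD0, hπ, hcy⟩ := h
  obtain ⟨x0⟩ : Nonempty X := nonempty_of_isProbabilityMeasure μ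
  obtain ⟨y0⟩ : Nonempty Y := nonempty_of_isProbabilityMeasure ν
  refine ⟨fun x => Real.log (D (x, y0)) + (1 / ε) * c x y0,
    fun y => Real.log (D (x0, y)) + (1 / ε) * c x0 y - Real.log (D (x0, y0)) - (1 / ε) * c x0 y0,
    ?_, ?_, ?_⟩
  · have h1 : Measurable fun x : X => (x, y0) := measurable_prodMk_right
    exact (hD.comp h1).log.add ((hc.comp h1).const_mul _)
  · have h1 : Measurable fun y : Y => (x0, y) := measurable_prodMk_left
    exact (((hD.comp h1).log.add ((hc.comp h1).const_mul _)).sub_const _).sub_const _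
  · rw [hπ]
    congr 1
    ext ⟨x, y⟩
    have h1 := hcy 1 ![x, x0] ![y, y0]
    simp [Fin.prod_univ_two, Fin.sum_univ_two] at h1
    congr 1
    have h2 := congrArg Real.log h1
    rw [Real.log_mul (hD0 _).ne' (hD0 _).ne', Real.log_mul (Real.exp_pos _).ne'
      (mul_pos (hD0 _) (hD0 _)).ne', Real.log_mul (hD0 _).ne' (hD0 _).ne', Real.log_exp] at h2
    rw [← Real.exp_log (hD0 (x, y))]
    congr 1
    simp only [one_div]
    linarith

lemma cycl_of_density (hc : Measurable fun p : X × Y => c p.1 p.2) {f : X → ℝ} {g : Y → ℝ}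
    (hf : Measurable f) (hg : Measurable g) {π : Measure (X × Y)} (hπ : IsCoupling μ ν π)
    (h : π = (μ.prod ν).withDensity
        (fun z => ENNReal.ofReal (Real.exp (f z.1 + g z.2 - (1 / ε) * c z.1 z.2)))) :
    IsCyclInvariant c ε μ ν π := by
  refine ⟨hπ, fun z => Real.exp (f z.1 + g z.2 - (1 / ε) * c z.1 z.2), ?_, fun z => Real.exp_pos _,
    h, ?_⟩
  · exact (((hf.comp measurable_fst).add (hg.comp measurable_snd)).sub (hc.const_mul _)).exp
  · intro k x y
    rw [← Real.exp_sum, ← Real.exp_sum, ← Real.exp_add]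
    congr 1
    have hs : ∑ i, g (y (i + 1)) = ∑ i, g (y i) :=
      Equiv.sum_comp (Equiv.addRight (1 : Fin (k + 1))) (fun i => g (y i))
    simp only [Finset.sum_sub_distrib, Finset.sum_add_distrib, ← Finset.mul_sum, hs]
    ring

lemma test_integral {D : X × Y → ℝ} (hD : Measurable D) (hD0 : ∀ z, 0 ≤ D z)
    (hcp : IsCoupling μ ν ((μ.prod ν).withDensity fun z => ENNReal.ofReal (D z)))
    {a : X → ℝ} {b : Y → ℝ} (ha : Measurable a) (hb : Measurable b) :
    Integrable (fun z => (Real.arctan (a z.1) + Real.arctan (b z.2)) * D z) (μ.prod ν) ∧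
    ∫ z, (Real.arctan (a z.1) + Real.arctan (b z.2)) * D z ∂(μ.prod ν)
      = ∫ x, Real.arctan (a x) ∂μ + ∫ y, Real.arctan (b y) ∂ν := by
  have hDi := ((coupling_iff hD hD0).1 hcp).1
  obtain ⟨h1, h2, h3⟩ := hcp
  have hbd : ∀ t : ℝ, ‖Real.arctan t‖ ≤ Real.pi / 2 := fun t => by
    rw [Real.norm_eq_abs, abs_le]
    exact ⟨(Real.neg_pi_div_two_lt_arctan t).le, (Real.arctan_lt_pi_div_two t).le⟩
  have ma : Measurable fun z : X × Y => Real.arctan (a z.1) :=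
    (Real.measurable_arctan.comp ha).comp measurable_fst
  have mb : Measurable fun z : X × Y => Real.arctan (b z.2) :=
    (Real.measurable_arctan.comp hb).comp measurable_snd
  have ia : Integrable (fun z => Real.arctan (a z.1) * D z) (μ.prod ν) :=
    hDi.bdd_mul ma.aestronglyMeasurable (ae_of_all _ fun z => hbd _)
  have ib : Integrable (fun z => Real.arctan (b z.2) * D z) (μ.prod ν) :=
    hDi.bdd_mul mb.aestronglyMeasurable (ae_of_all _ fun z => hbd _)
  have hlt : ∀ᵐ z ∂(μ.prod ν), ENNReal.ofReal (D z) < ∞ :=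
    ae_of_all _ fun _ => ENNReal.ofReal_lt_top
  have e : ∀ k : X × Y → ℝ, ∫ z, k z ∂((μ.prod ν).withDensity fun z => ENNReal.ofReal (D z))
      = ∫ z, k z * D z ∂(μ.prod ν) := fun k => by
    rw [integral_withDensity_eq_integral_toReal_smul hD.ennreal_ofReal hlt]
    refine integral_congr_ae (ae_of_all _ fun z => ?_)
    simp only [ENNReal.toReal_ofReal (hD0 z), smul_eq_mul]; ring
  refine ⟨(ia.add ib).congr (ae_of_all _ fun z => by simp only [Pi.add_apply]; ring), ?_⟩
  simp_rw [add_mul]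
  rw [integral_add ia ib, ← e, ← e]
  congr 1
  · conv_rhs => rw [← h2]
    rw [integral_map measurable_fst.aemeasurable]
    exact (Real.measurable_arctan.comp ha).aestronglyMeasurable
  · conv_rhs => rw [← h3]
    rw [integral_map measurable_snd.aemeasurable]
    exact (Real.measurable_arctan.comp hb).aestronglyMeasurable

lemma sign_aux {a b r s : ℝ} (h : r - s = a + b) :
    0 ≤ (Real.arctan a + Real.arctan b) * (Real.exp r - Real.exp s) ∧
    ((Real.arctan a + Real.arctan b) * (Real.exp r - Real.exp s) = 0 →
      Real.exp r = Real.exp s) := by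
  rcases lt_trichotomy (a + b) 0 with h0 | h0 | h0
  · have h1 : Real.arctan a < Real.arctan (-b) := Real.arctan_strictMono (by linarith)
    rw [Real.arctan_neg] at h1
    have h2 : Real.exp r < Real.exp s := Real.exp_lt_exp.2 (by linarith)
    have : 0 < (Real.arctan a + Real.arctan b) * (Real.exp r - Real.exp s) :=
      mul_pos_of_neg_of_neg (by linarith) (by linarith)
    exact ⟨this.le, fun h => absurd h this.ne'⟩
  · have : r = s := by linarith
    subst this
    simp
  · have h1 : Real.arctan (-b) < Real.arctan a := Real.arctan_strictMono (by linarith)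
    rw [Real.arctan_neg] at h1
    have h2 : Real.exp s < Real.exp r := Real.exp_lt_exp.2 (by linarith)
    have : 0 < (Real.arctan a + Real.arctan b) * (Real.exp r - Real.exp s) :=
      mul_pos (by linarith) (by linarith)
    exact ⟨this.le, fun h => absurd h this.ne'⟩

lemma cycl_unique (hc : Measurable fun p : X × Y => c p.1 p.2) {π₁ π₂ : Measure (X × Y)}
    (h1 : IsCyclInvariant c ε μ ν π₁) (h2 : IsCyclInvariant c ε μ ν π₂) : π₁ = π₂ := by
  obtain ⟨f1, g1, hf1, hg1, e1⟩ := exists_factor hc h1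
  obtain ⟨f2, g2, hf2, hg2, e2⟩ := exists_factor hc h2
  have c1 := h1.1
  have c2 := h2.1
  rw [e1] at c1
  rw [e2] at c2
  have m1 : Measurable fun z : X × Y => Real.exp (f1 z.1 + g1 z.2 - (1 / ε) * c z.1 z.2) :=
    (((hf1.comp measurable_fst).add (hg1.comp measurable_snd)).sub (hc.const_mul _)).exp
  have m2 : Measurable fun z : X × Y => Real.exp (f2 z.1 + g2 z.2 - (1 / ε) * c z.1 z.2) :=
    (((hf2.comp measurable_fst).add (hg2.comp measurable_snd)).sub (hc.const_mul _)).exp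
  obtain ⟨i1, j1⟩ := test_integral m1 (fun z => (Real.exp_pos _).le) c1 (hf1.sub hf2) (hg1.sub hg2)
  obtain ⟨i2, j2⟩ := test_integral m2 (fun z => (Real.exp_pos _).le) c2 (hf1.sub hf2) (hg1.sub hg2)
  have hz := integral_sub' i1 i2
  rw [j1, j2, sub_self] at hz
  rw [integral_eq_zero_iff_of_nonneg _ (i1.sub i2)] at hz
  · rw [e1, e2]
    refine withDensity_congr_ae ?_
    filter_upwards [hz] with z hz
    have hz' : (Real.arctan ((f1 - f2) z.1) + Real.arctan ((g1 - g2) z.2)) *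
      (Real.exp (f1 z.1 + g1 z.2 - (1 / ε) * c z.1 z.2)
        - Real.exp (f2 z.1 + g2 z.2 - (1 / ε) * c z.1 z.2)) = 0 := by
      rw [mul_sub]; exact hz
    rw [(sign_aux (by simp only [Pi.sub_apply]; ring)).2 hz']
  · intro z
    simp only [Pi.zero_apply, Pi.sub_apply, ← mul_sub]
    exact (sign_aux (by ring)).1

end Uniq

section Pert

lemma exists_proj {Ω W : Type*} [MeasurableSpace Ω] [MeasurableSpace W] {Q : Measure Ω}
    {P : Measure W} [IsProbabilityMeasure Q] [IsProbabilityMeasure P] {T : Ω → W}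
    (hT : MeasurePreserving T Q P) {S : Set Ω} {B : Set W}
    (hB : MeasurableSet B) (hSB : ∀ q ∈ S, T q ∈ B) :
    ∃ θ : W → ℝ, Measurable θ ∧ (∀ w, 0 ≤ θ w) ∧ (∀ w, θ w ≤ 1) ∧ (∀ w, w ∉ B → θ w = 0) ∧
      ∀ ψ : W → ℝ, Measurable ψ → ∫ w, ψ w * θ w ∂P = ∫ q in S, ψ (T q) ∂Q := by
  classical
  set m := (Q.restrict S).map T with hm
  have hle : m ≤ P := by
    rw [← hT.map_eq]
    exact Measure.map_mono Measure.restrict_le_self hT.measurable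
  have hfin : IsFiniteMeasure m := isFiniteMeasure_of_le P hle
  have hac : m ≪ P := Measure.absolutelyContinuous_of_le hle
  have h1 : m.rnDeriv P ≤ᵐ[P] 1 := Measure.rnDeriv_le_one_of_le hle
  have hwd := Measure.withDensity_rnDeriv_eq m P hac
  have hmd := Measure.measurable_rnDeriv m P
  have hBc : m Bᶜ = 0 := by
    rw [hm, Measure.map_apply hT.measurable hB.compl,
      Measure.restrict_apply (hT.measurable hB.compl)]
    convert measure_empty (μ := Q)
    ext q
    simp only [mem_inter_iff, mem_preimage, mem_compl_iff, mem_empty_iff_false, iff_false, not_and]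
    exact fun h1 h2 => h1 (hSB q h2)
  have h0 : ∀ᵐ w ∂P, w ∈ Bᶜ → m.rnDeriv P w = 0 := by
    rw [← hwd, withDensity_apply _ hB.compl, lintegral_eq_zero_iff hmd] at hBc
    exact (ae_restrict_iff' hB.compl).1 hBc
  refine ⟨B.indicator fun w => min (m.rnDeriv P w).toReal 1,
    ((hmd.ennreal_toReal).min measurable_const).indicator hB, ?_, ?_, ?_, ?_⟩
  · exact fun w => indicator_nonneg (fun w _ => le_min ENNReal.toReal_nonneg zero_le_one) w
  · intro w
    by_cases hw : w ∈ B
    · rw [indicator_of_mem hw]; exact min_le_right _ _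
    · rw [indicator_of_notMem hw]; exact zero_le_one
  · intro w hw; exact indicator_of_notMem hw _
  · intro ψ hψ
    rw [← integral_map hT.measurable.aemeasurable hψ.aestronglyMeasurable, ← hm]
    conv_rhs => rw [← hwd]
    rw [integral_withDensity_eq_integral_toReal_smul hmd (Measure.rnDeriv_lt_top m P)]
    refine integral_congr_ae ?_
    filter_upwards [h1, h0] with w hw1 hw0
    rw [smul_eq_mul, mul_comm]
    congr 1
    by_cases hw : w ∈ B
    · rw [indicator_of_mem hw, min_eq_left]
      exact ENNReal.toReal_le_of_le_ofReal zero_le_one (by simpa using hw1)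
    · rw [indicator_of_notMem hw, hw0 hw]; simp

variable [MeasurableSpace X] [MeasurableSpace Y]
  {μ : Measure X} {ν : Measure Y} [IsProbabilityMeasure μ] [IsProbabilityMeasure ν]
  {c : X → Y → ℝ} {ε : ℝ}

/-- First off-diagonal recombination of a pair of points. -/
def T3 (q : (X × Y) × (X × Y)) : X × Y := (q.1.1, q.2.2)
/-- Second off-diagonal recombination of a pair of points. -/
def T4 (q : (X × Y) × (X × Y)) : X × Y := (q.2.1, q.1.2)

lemma mp3 : MeasurePreserving (T3 (X := X) (Y := Y)) ((μ.prod ν).prod (μ.prod ν)) (μ.prod ν) :=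
  (measurePreserving_fst (μ := μ) (ν := ν)).prod (measurePreserving_snd (μ := μ) (ν := ν))

lemma mp4 : MeasurePreserving (T4 (X := X) (Y := Y)) ((μ.prod ν).prod (μ.prod ν)) (μ.prod ν) :=
  mp3.comp Measure.measurePreserving_swap

lemma mp1 : MeasurePreserving (Prod.fst : (X × Y) × (X × Y) → X × Y)
    ((μ.prod ν).prod (μ.prod ν)) (μ.prod ν) := measurePreserving_fst

lemma mp2 : MeasurePreserving (Prod.snd : (X × Y) × (X × Y) → X × Y)
    ((μ.prod ν).prod (μ.prod ν)) (μ.prod ν) := measurePreserving_snd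

/-- Cyclic bracket. -/
def Br (ψ : X × Y → ℝ) (q : (X × Y) × (X × Y)) : ℝ := ψ (T3 q) + ψ (T4 q) - ψ q.1 - ψ q.2

lemma measurable_T3 : Measurable (T3 (X := X) (Y := Y)) :=
  (measurable_fst.comp measurable_fst).prodMk (measurable_snd.comp measurable_snd)

lemma measurable_T4 : Measurable (T4 (X := X) (Y := Y)) :=
  (measurable_fst.comp measurable_snd).prodMk (measurable_snd.comp measurable_fst)

lemma measurable_Br {ψ : X × Y → ℝ} (h : Measurable ψ) : Measurable (Br ψ) :=
  (((h.comp measurable_T3).add (h.comp measurable_T4)).sub (h.comp measurable_fst)).sub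
    (h.comp measurable_snd)

lemma int_of_bdd {Ω : Type*} [MeasurableSpace Ω] {P : Measure Ω} [IsFiniteMeasure P] {f : Ω → ℝ}
    (hf : Measurable f) {K : ℝ} (h : ∀ z, |f z| ≤ K) : Integrable f P :=
  (integrable_const K).mono' hf.aestronglyMeasurable (ae_of_all _ h)

lemma exists_swap {S : Set ((X × Y) × (X × Y))} (hS : MeasurableSet S) {B C : Set (X × Y)}
    (hB : MeasurableSet B) (hC : MeasurableSet C) (h1 : ∀ q ∈ S, q.1 ∈ B) (h2 : ∀ q ∈ S, q.2 ∈ B)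
    (h3 : ∀ q ∈ S, T3 q ∈ C) (h4 : ∀ q ∈ S, T4 q ∈ C) :
    ∃ h : X × Y → ℝ, Measurable h ∧ (∀ z, |h z| ≤ 2) ∧ (∀ z, h z < 0 → z ∈ B) ∧
      (∀ z, 0 < h z → z ∈ C) ∧
      ∀ ψ : X × Y → ℝ, Measurable ψ → ∀ K : ℝ, (∀ z, z ∈ B ∪ C → |ψ z| ≤ K) →
        Integrable (fun z => ψ z * h z) (μ.prod ν) ∧
        IntegrableOn (Br ψ) S ((μ.prod ν).prod (μ.prod ν)) ∧
        ∫ z, ψ z * h z ∂(μ.prod ν) = ∫ q in S, Br ψ q ∂((μ.prod ν).prod (μ.prod ν)) := by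
  obtain ⟨θ1, m1, p1, l1, s1, e1⟩ := exists_proj (mp1 (μ := μ) (ν := ν)) hB h1
  obtain ⟨θ2, m2, p2, l2, s2, e2⟩ := exists_proj (mp2 (μ := μ) (ν := ν)) hB h2
  obtain ⟨θ3, m3, p3, l3, s3, e3⟩ := exists_proj (mp3 (μ := μ) (ν := ν)) hC h3
  obtain ⟨θ4, m4, p4, l4, s4, e4⟩ := exists_proj (mp4 (μ := μ) (ν := ν)) hC h4
  refine ⟨fun z => θ3 z + θ4 z - θ1 z - θ2 z, ((m3.add m4).sub m1).sub m2, ?_, ?_, ?_, ?_⟩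
  · intro z
    rw [abs_le]
    constructor <;> linarith [p1 z, p2 z, p3 z, p4 z, l1 z, l2 z, l3 z, l4 z]
  · intro z hz
    by_contra hzB
    linarith [s1 z hzB, s2 z hzB, p3 z, p4 z]
  · intro z hz
    by_contra hzC
    linarith [s3 z hzC, s4 z hzC, p1 z, p2 z]
  · intro ψ hψ K hK
    have hb : ∀ (θ : X × Y → ℝ) (D : Set (X × Y)), Measurable θ → (∀ z, 0 ≤ θ z) →
        (∀ z, θ z ≤ 1) → (∀ z, z ∉ D → θ z = 0) → D ⊆ B ∪ C →
        Integrable (fun z => ψ z * θ z) (μ.prod ν) := by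
      intro θ D mθ pθ lθ sθ hD
      refine int_of_bdd (K := |K|) (hψ.mul mθ) fun z => ?_
      by_cases hz : z ∈ D
      · rw [abs_mul, abs_of_nonneg (pθ z)]
        have := hK z (hD hz)
        have h5 := le_abs_self K
        have h6 := abs_nonneg (ψ z)
        nlinarith [pθ z, lθ z]
      · rw [sθ z hz]; simp
    have i1 := hb θ1 B m1 p1 l1 s1 subset_union_left
    have i2 := hb θ2 B m2 p2 l2 s2 subset_union_left
    have i3 := hb θ3 C m3 p3 l3 s3 subset_union_right
    have i4 := hb θ4 C m4 p4 l4 s4 subset_union_right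
    have hq : ∀ T : (X × Y) × (X × Y) → X × Y, Measurable T → (∀ q ∈ S, T q ∈ B ∪ C) →
        IntegrableOn (fun q => ψ (T q)) S ((μ.prod ν).prod (μ.prod ν)) := by
      intro T hT hTS
      refine (integrable_const K).mono' (hψ.comp hT).aestronglyMeasurable ?_
      exact (ae_restrict_iff' hS).2 (ae_of_all _ fun q hq => hK _ (hTS q hq))
    have j1 := hq Prod.fst measurable_fst fun q hq => Or.inl (h1 q hq)
    have j2 := hq Prod.snd measurable_snd fun q hq => Or.inl (h2 q hq)
    have j3 := hq T3 (mp3 (μ := μ) (ν := ν)).measurable fun q hq => Or.inr (h3 q hq)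
    have j4 := hq T4 (mp4 (μ := μ) (ν := ν)).measurable fun q hq => Or.inr (h4 q hq)
    refine ⟨(((i3.add i4).sub i1).sub i2).congr (ae_of_all _ fun z => ?_),
      ((j3.add j4).sub j1).sub j2, ?_⟩
    · simp only [Pi.add_apply, Pi.sub_apply]; ring
    · have e : ∀ z, ψ z * (θ3 z + θ4 z - θ1 z - θ2 z)
          = ψ z * θ3 z + ψ z * θ4 z - ψ z * θ1 z - ψ z * θ2 z := fun z => by ring
      simp_rw [e]
      have i34 : Integrable (fun z => ψ z * θ3 z + ψ z * θ4 z) (μ.prod ν) := i3.add i4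
      have i341 : Integrable (fun z => ψ z * θ3 z + ψ z * θ4 z - ψ z * θ1 z) (μ.prod ν) :=
        i34.sub i1
      rw [integral_sub i341 i2, integral_sub i34 i1, integral_add i3 i4, e1 ψ hψ, e2 ψ hψ,
        e3 ψ hψ, e4 ψ hψ]
      have j34 : IntegrableOn (fun q => ψ (T3 q) + ψ (T4 q)) S ((μ.prod ν).prod (μ.prod ν)) :=
        j3.add j4
      have j341 : IntegrableOn (fun q => ψ (T3 q) + ψ (T4 q) - ψ q.1) S
        ((μ.prod ν).prod (μ.prod ν)) := j34.sub j1
      simp only [Br]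
      rw [integral_sub j341 j2, integral_sub j34 j1, integral_add j3 j4]

/-- First order inequality at a minimizer. -/
lemma variational (hε : 0 < ε) {Z : X × Y → ℝ} (hZ : Feas c μ ν Z) (hmin : ∀ W, Feas c μ ν W → J c ε μ ν Z ≤ J c ε μ ν W)
    {h G : X × Y → ℝ} (hm : Measurable h) (hi : Integrable h (μ.prod ν))
    (hA : ∀ A : Set X, MeasurableSet A → ∫ z in Prod.fst ⁻¹' A, h z ∂(μ.prod ν) = 0)
    (hB : ∀ B : Set Y, MeasurableSet B → ∫ z in Prod.snd ⁻¹' B, h z ∂(μ.prod ν) = 0)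
    {t : ℝ} (ht : 0 < t) (h0 : ∀ z, 0 ≤ Z z + t * h z)
    (hci : Integrable (fun z => c z.1 z.2 * h z) (μ.prod ν)) (hG : Integrable G (μ.prod ν))
    (hle : ∀ z, (Z z + t * h z) * Real.log (Z z + t * h z) ≤ Z z * Real.log (Z z) + t * G z) :
    0 ≤ ∫ z, c z.1 z.2 * h z ∂(μ.prod ν) + ε * ∫ z, G z ∂(μ.prod ν) := by
  have hWm : Measurable fun z => Z z + t * h z := hZ.meas.add (hm.const_mul t)
  have hci' : Integrable (fun z => t * (c z.1 z.2 * h z)) (μ.prod ν) := hci.const_mul t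
  have hG' : Integrable (fun z => t * G z) (μ.prod ν) := hG.const_mul t
  have hW : Feas c μ ν (fun z => Z z + t * h z) := by
    refine ⟨hWm, h0, ?_, ?_, ?_⟩
    · obtain ⟨i1, a1, b1⟩ := (coupling_iff hZ.meas hZ.nonneg).1 hZ.cpl
      refine (coupling_iff hWm h0).2 ⟨i1.add (hi.const_mul t), fun A hA' => ?_, fun B hB' => ?_⟩
      · rw [integral_add i1.integrableOn (hi.const_mul t).integrableOn, integral_const_mul,
          hA A hA', a1 A hA']; ring
      · rw [integral_add i1.integrableOn (hi.const_mul t).integrableOn, integral_const_mul,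
          hB B hB', b1 B hB']; ring
    · refine (hZ.intc.add hci').congr (ae_of_all _ fun z => ?_)
      simp only [Pi.add_apply]; ring
    · refine ((hZ.inte.norm.add hG'.norm).add (integrable_const (1 : ℝ))).mono'
        (hWm.mul hWm.log).aestronglyMeasurable (ae_of_all _ fun z => ?_)
      have h1 := mul_log_ge (h0 z)
      have h2 := hle z
      simp only [Pi.add_apply, Real.norm_eq_abs]
      have h4 := le_abs_self (Z z * Real.log (Z z))
      have h5 := le_abs_self (t * G z)
      have h6 := abs_nonneg (Z z * Real.log (Z z))
      have h7 := abs_nonneg (t * G z)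
      rw [abs_le]; constructor <;> linarith
  have h1 := hmin _ hW
  have e1 : ∫ z, c z.1 z.2 * (Z z + t * h z) ∂(μ.prod ν)
      = ∫ z, c z.1 z.2 * Z z ∂(μ.prod ν) + t * ∫ z, c z.1 z.2 * h z ∂(μ.prod ν) := by
    rw [← integral_const_mul, ← integral_add hZ.intc hci']
    congr 1; ext z; ring
  have e2 : ∫ z, (Z z + t * h z) * Real.log (Z z + t * h z) ∂(μ.prod ν)
      ≤ ∫ z, Z z * Real.log (Z z) ∂(μ.prod ν) + t * ∫ z, G z ∂(μ.prod ν) := by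
    rw [← integral_const_mul, ← integral_add hZ.inte hG']
    exact integral_mono hW.inte (hZ.inte.add hG') hle
  simp only [J] at h1
  rw [e1] at h1
  have h2 := mul_le_mul_of_nonneg_left e2 hε.le
  have h3 : 0 ≤ t * (∫ z, c z.1 z.2 * h z ∂(μ.prod ν) + ε * ∫ z, G z ∂(μ.prod ν)) := by
    nlinarith
  exact nonneg_of_mul_nonneg_right h3 ht

end Pert

section Foc

variable [MeasurableSpace X] [MeasurableSpace Y]
  {μ : Measure X} {ν : Measure Y} [IsProbabilityMeasure μ] [IsProbabilityMeasure ν]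
  {c : X → Y → ℝ} {ε : ℝ}

lemma swap_marg {S : Set ((X × Y) × (X × Y))} {h : X × Y → ℝ}
    (H : ∀ ψ : X × Y → ℝ, Measurable ψ → ∀ K : ℝ, (∀ z, |ψ z| ≤ K) →
        ∫ z, ψ z * h z ∂(μ.prod ν) = ∫ q in S, Br ψ q ∂((μ.prod ν).prod (μ.prod ν))) :
    (∀ A : Set X, MeasurableSet A → ∫ z in Prod.fst ⁻¹' A, h z ∂(μ.prod ν) = 0) ∧
    (∀ B : Set Y, MeasurableSet B → ∫ z in Prod.snd ⁻¹' B, h z ∂(μ.prod ν) = 0) := by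
  classical
  have key : ∀ D : Set (X × Y), MeasurableSet D →
      (∀ q, Br (D.indicator fun _ => (1 : ℝ)) q = 0) → ∫ z in D, h z ∂(μ.prod ν) = 0 := by
    intro D hD hq
    have h1 := H (D.indicator fun _ => (1 : ℝ)) (measurable_const.indicator hD) 1 (fun z => by
      by_cases hz : z ∈ D <;> simp [hz])
    simp only [hq, integral_zero] at h1
    rw [← integral_indicator hD, ← h1]
    congr 1; ext z
    by_cases hz : z ∈ D <;> simp [hz]
  refine ⟨fun A hA => key _ (measurable_fst hA) ?_, fun B hB => key _ (measurable_snd hB) ?_⟩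
  · rintro ⟨⟨x, y⟩, x', y'⟩
    simp [Br, T3, T4, indicator_apply]
  · rintro ⟨⟨x, y⟩, x', y'⟩
    simp [Br, T3, T4, indicator_apply]

lemma log_pert {Z h t δ : ℝ} (hδ : 0 < δ) (hZ : δ ≤ Z) (hh : |h| ≤ 2) (ht : 0 < t)
    (htδ : t ≤ δ / 4) :
    (Z + t * h) * Real.log (Z + t * h) ≤ Z * Real.log Z + t * (h + h * Real.log Z + 8 * t / δ) := by
  obtain ⟨hl, hu⟩ := abs_le.1 hh
  have hZp : 0 < Z := by linarith
  have hv : Z / 2 ≤ Z + t * h := by nlinarith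
  have hWp : 0 < Z + t * h := by linarith
  have h1 := mul_log_sub_le hWp hZp.le
  set r := t * h / Z with hr
  have hr1 : (1 / 2 : ℝ) ≤ 1 + r := by
    have : 1 + r = (Z + t * h) / Z := by rw [hr]; field_simp
    rw [this, le_div_iff₀ hZp]; linarith
  have hlog : Real.log (Z + t * h) = Real.log Z + Real.log (1 + r) := by
    rw [← Real.log_mul hZp.ne' (by linarith)]
    congr 1; rw [hr]; field_simp
  have h2 : h * Real.log (1 + r) ≤ 2 * (h * r) := by
    rcases le_total 0 h with h0 | h0
    · have hr0 : 0 ≤ r := by rw [hr]; positivity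
      have := Real.log_le_sub_one_of_pos (show 0 < 1 + r by linarith)
      nlinarith [mul_nonneg h0 hr0]
    · have hr0 : r ≤ 0 := by
        rw [hr]; exact div_nonpos_of_nonpos_of_nonneg (by nlinarith) hZp.le
      have h3 := Real.one_sub_inv_le_log_of_pos (show 0 < 1 + r by linarith)
      have h4 : 2 * r ≤ 1 - (1 + r)⁻¹ := by
        have : 1 - (1 + r)⁻¹ = r / (1 + r) := by
          have : 1 + r ≠ 0 := by linarith
          field_simp; ring
        rw [this, le_div_iff₀ (by linarith)]
        nlinarith
      nlinarith
  have h5 : 2 * (h * r) ≤ 8 * t / δ := by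
    have e : 2 * (h * r) = 2 * t * h ^ 2 / Z := by rw [hr]; ring
    rw [e, div_le_div_iff₀ hZp hδ]
    have : h ^ 2 ≤ 4 := by nlinarith
    have h6 : h ^ 2 * δ ≤ 4 * Z := by nlinarith [sq_nonneg h]
    nlinarith
  rw [hlog] at h1 ⊢
  nlinarith

/-- Potential function `c + ε log Z`. -/
def Lf (c : X → Y → ℝ) (ε : ℝ) (Z : X × Y → ℝ) (z : X × Y) : ℝ :=
  c z.1 z.2 + ε * Real.log (Z z)

lemma foc_level (hε : 0 < ε) (hc : Measurable fun p : X × Y => c p.1 p.2)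
    (hc0 : ∀ x y, 0 ≤ c x y)
    {Z : X × Y → ℝ} (hZ : Feas c μ ν Z) (hmin : ∀ W, Feas c μ ν W → J c ε μ ν Z ≤ J c ε μ ν W)
    {δ M : ℝ} (hδ : 0 < δ) {s : ℝ} (hs : |s| ≤ 1) :
    ∀ᵐ q ∂((μ.prod ν).prod (μ.prod ν)),
      (∀ z ∈ ({q.1, q.2, T3 q, T4 q} : Set (X × Y)), δ ≤ Z z ∧ Z z ≤ M ∧ c z.1 z.2 ≤ M) →
      0 ≤ s * Br (Lf c ε Z) q := by
  set B : Set (X × Y) := {z | δ ≤ Z z ∧ Z z ≤ M ∧ c z.1 z.2 ≤ M} with hBdef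
  have hB : MeasurableSet B :=
    (measurableSet_le measurable_const hZ.meas).inter
      ((measurableSet_le hZ.meas measurable_const).inter (measurableSet_le hc measurable_const))
  have hLm : Measurable (Lf c ε Z) := hc.add (hZ.meas.log.const_mul ε)
  set S : Set ((X × Y) × (X × Y)) := (((Prod.fst ⁻¹' B ∩ Prod.snd ⁻¹' B) ∩ T3 ⁻¹' B) ∩ T4 ⁻¹' B)
    ∩ {q | s * Br (Lf c ε Z) q < 0} with hSdef
  have hS : MeasurableSet S :=
    ((((measurable_fst hB).inter (measurable_snd hB)).inter (measurable_T3 hB)).inter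
      (measurable_T4 hB)).inter
      (measurableSet_lt ((measurable_Br hLm).const_mul s) measurable_const)
  obtain ⟨h, hm, h2, hn, hp, H⟩ := exists_swap (μ := μ) (ν := ν) hS hB hB
    (fun q hq => hq.1.1.1.1) (fun q hq => hq.1.1.1.2) (fun q hq => hq.1.1.2) (fun q hq => hq.1.2)
  have hsup : ∀ z, h z ≠ 0 → z ∈ B := fun z hz => (lt_or_gt_of_ne hz).elim (hn z) (hp z)
  have hmarg := swap_marg (μ := μ) (ν := ν) (S := S) (h := h) fun ψ hψ K hK =>
    (H ψ hψ K fun z _ => hK z).2.2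
  have hi : Integrable h (μ.prod ν) := int_of_bdd hm h2
  have h00 : ∫ z, h z ∂(μ.prod ν) = 0 := by
    have := hmarg.1 univ MeasurableSet.univ
    simpa using this
  -- bounds
  have hcb : ∀ z, z ∈ B ∪ B → |c z.1 z.2| ≤ M := by
    intro z hz
    rw [union_self] at hz
    rw [abs_of_nonneg (hc0 _ _)]; exact hz.2.2
  have hlb : ∀ z, z ∈ B ∪ B → |Real.log (Z z)| ≤ |Real.log δ| + |Real.log M| := by
    intro z hz
    rw [union_self] at hz
    have l1 := Real.log_le_log hδ hz.1
    have l2 := Real.log_le_log (hδ.trans_le hz.1) hz.2.1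
    rw [abs_le]
    constructor <;> linarith [neg_abs_le (Real.log δ), le_abs_self (Real.log M),
      abs_nonneg (Real.log δ), abs_nonneg (Real.log M)]
  have Hc := H _ hc M hcb
  have Hl := H _ hZ.meas.log _ hlb
  have HL := H (Lf c ε Z) hLm (M + ε * (|Real.log δ| + |Real.log M|)) (fun z hz => by
    refine (abs_add_le _ _).trans (add_le_add (hcb z hz) ?_)
    rw [abs_mul, abs_of_pos hε]
    exact mul_le_mul_of_nonneg_left (hlb z hz) hε.le)
  have eL : ∫ z, Lf c ε Z z * h z ∂(μ.prod ν) = ∫ z, c z.1 z.2 * h z ∂(μ.prod ν)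
      + ε * ∫ z, Real.log (Z z) * h z ∂(μ.prod ν) := by
    rw [← integral_const_mul, ← integral_add Hc.1 (Hl.1.const_mul ε)]
    congr 1; ext z; simp only [Lf]; ring
  have main : ∀ t, 0 < t → t ≤ δ / 4 →
      0 ≤ s * ∫ z, Lf c ε Z z * h z ∂(μ.prod ν) + ε * (8 * t / δ) := by
    intro t ht htδ
    have hsl : Integrable (fun z => s * (Real.log (Z z) * h z)) (μ.prod ν) := Hl.1.const_mul s
    have hsh : Integrable (fun z => s * h z) (μ.prod ν) := hi.const_mul s
    have hs2 : ∀ z, |s * h z| ≤ 2 := fun z => by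
      rw [abs_mul]
      nlinarith [abs_nonneg s, abs_nonneg (h z), h2 z]
    have hsum : Integrable (fun z => s * h z + s * (Real.log (Z z) * h z)) (μ.prod ν) :=
      hsh.add hsl
    have hV := variational hε hZ hmin (h := fun z => s * h z)
      (G := fun z => s * h z + s * (Real.log (Z z) * h z) + 8 * t / δ) (hm.const_mul s)
      hsh
      (fun A hA => by rw [integral_const_mul, hmarg.1 A hA, mul_zero])
      (fun A hA => by rw [integral_const_mul, hmarg.2 A hA, mul_zero]) ht
      (fun z => by
        by_cases hz : h z = 0
        · simp [hz, hZ.nonneg z]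
        · have h3 := (hsup z hz).1
          have h4 := (abs_le.1 (hs2 z)).1
          nlinarith)
      ((Hc.1.const_mul s).congr (ae_of_all _ fun z => by simp only []; ring))
      (hsum.add (integrable_const _))
      (fun z => by
        by_cases hz : h z = 0
        · simp only [hz, mul_zero, add_zero, zero_add]
          have : 0 ≤ t * (8 * t / δ) := by positivity
          linarith
        · have := log_pert hδ (hsup z hz).1 (hs2 z) ht htδ
          refine this.trans (le_of_eq ?_)
          ring)
    rw [integral_add hsum (integrable_const _), integral_add hsh hsl, integral_const_mul,
      integral_const_mul, h00, integral_const, probReal_univ, one_smul] at hV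
    have e3 : ∫ z, c z.1 z.2 * (s * h z) ∂(μ.prod ν) = s * ∫ z, c z.1 z.2 * h z ∂(μ.prod ν) := by
      rw [← integral_const_mul]; congr 1; ext z; ring
    rw [e3] at hV
    rw [eL]
    linarith
  have hge : 0 ≤ s * ∫ z, Lf c ε Z z * h z ∂(μ.prod ν) := by
    by_contra hneg
    push Not at hneg
    set a := s * ∫ z, Lf c ε Z z * h z ∂(μ.prod ν) with ha
    have h3 := main (min (δ / 4) (-a * δ / (16 * ε))) (lt_min (by positivity) (by
      have : 0 < -a := by linarith
      positivity)) (min_le_left _ _)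
    have h4 : ε * (8 * min (δ / 4) (-a * δ / (16 * ε)) / δ)
        ≤ ε * (8 * (-a * δ / (16 * ε)) / δ) := by
      gcongr
      exact min_le_right _ _
    have h5 : ε * (8 * (-a * δ / (16 * ε)) / δ) = -a / 2 := by field_simp; ring
    linarith
  rw [HL.2.2, ← integral_const_mul] at hge
  have hIntg : IntegrableOn (fun q => s * Br (Lf c ε Z) q) S ((μ.prod ν).prod (μ.prod ν)) :=
    HL.2.1.const_mul s
  have hS0 : ((μ.prod ν).prod (μ.prod ν)) S = 0 := by
    have h1 : ∫ q in S, -(s * Br (Lf c ε Z) q) ∂((μ.prod ν).prod (μ.prod ν)) = 0 := by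
      refine le_antisymm ?_ (setIntegral_nonneg hS fun q hq => ?_)
      · rw [integral_neg]; linarith
      · have : s * Br (Lf c ε Z) q < 0 := hq.2
        linarith
    have hneg : IntegrableOn (fun q => -(s * Br (Lf c ε Z) q)) S
      ((μ.prod ν).prod (μ.prod ν)) := hIntg.neg
    rw [setIntegral_eq_zero_iff_of_nonneg_ae _ hneg] at h1
    · rw [← Measure.restrict_apply_self, measure_eq_zero_iff_ae_notMem]
      filter_upwards [h1] with q hq hqS
      have h3 : s * Br (Lf c ε Z) q < 0 := hqS.2
      simp at hq
      rcases hq with hq | hq <;> simp [hq] at h3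
    · refine (ae_restrict_iff' hS).2 (ae_of_all _ fun q hq => ?_)
      have : s * Br (Lf c ε Z) q < 0 := hq.2
      simp only [Pi.zero_apply]
      linarith
  filter_upwards [measure_eq_zero_iff_ae_notMem.1 hS0] with q hq hqB
  by_contra hlt
  push Not at hlt
  exact hq ⟨⟨⟨⟨hqB _ (by simp), hqB _ (by simp)⟩, hqB _ (by simp)⟩, hqB _ (by simp)⟩, hlt⟩

end Foc

section Posit

variable [MeasurableSpace X] [MeasurableSpace Y]
  {μ : Measure X} {ν : Measure Y} [IsProbabilityMeasure μ] [IsProbabilityMeasure ν]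
  {c : X → Y → ℝ} {ε : ℝ}

lemma pos_pert {Z h t δ M : ℝ} (hδ : 0 < δ) (hM : 0 ≤ M) (hZ0 : 0 ≤ Z) (hh : |h| ≤ 2)
    (ht : 0 < t) (htδ : t ≤ δ / 4) (ht2 : t < 1 / 2) (hneg : h < 0 → δ ≤ Z) (hpos : 0 < h → Z ≤ M) :
    (Z + t * h) * Real.log (Z + t * h) ≤ Z * Real.log Z +
      t * ((if Z = 0 then 1 else 0) * h * Real.log (2 * t) +
        (2 * (1 + Real.log (M + 1)) + 2 * (1 + |Real.log (δ / 2)|))) := by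
  obtain ⟨hl, hu⟩ := abs_le.1 hh
  have hlM : 0 ≤ Real.log (M + 1) := Real.log_nonneg (by linarith)
  have hld := abs_nonneg (Real.log (δ / 2))
  have hK : 0 ≤ 2 * (1 + Real.log (M + 1)) + 2 * (1 + |Real.log (δ / 2)|) := by positivity
  have htK := mul_nonneg ht.le hK
  rcases lt_trichotomy h 0 with h0 | h0 | h0
  · have hZ := hneg h0
    have hZp : 0 < Z := by linarith
    have hW : δ / 2 ≤ Z + t * h := by nlinarith
    have h1 := mul_log_sub_le (show 0 < Z + t * h by linarith) hZ0
    have h2 := Real.log_le_log (by positivity) hW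
    rw [if_neg hZp.ne']
    have h3 : h * (1 + Real.log (Z + t * h)) ≤ 2 * (1 + |Real.log (δ / 2)|) := by
      have h4 : h * (1 + Real.log (Z + t * h)) ≤ h * (1 + Real.log (δ / 2)) := by nlinarith
      have h5 := neg_abs_le (Real.log (δ / 2))
      nlinarith
    have h6 : t * (h * (1 + Real.log (Z + t * h))) ≤ t * (2 * (1 + |Real.log (δ / 2)|)) :=
      mul_le_mul_of_nonneg_left h3 ht.le
    have h7 := mul_nonneg ht.le hlM
    nlinarith
  · subst h0
    simp only [mul_zero, add_zero, zero_mul, zero_add]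
    linarith
  · by_cases hz : Z = 0
    · subst hz
      simp only [if_true, zero_add, zero_mul, one_mul]
      have h1 : Real.log (t * h) ≤ Real.log (2 * t) :=
        Real.log_le_log (by positivity) (by nlinarith)
      have h2 := mul_le_mul_of_nonneg_left h1 (mul_pos ht h0).le
      nlinarith
    · have hZM := hpos h0
      have hth : 0 < t * h := mul_pos ht h0
      have hW : Z + t * h ≤ M + 1 := by nlinarith
      have h1 := mul_log_sub_le (show 0 < Z + t * h by linarith) hZ0
      have h2 := Real.log_le_log (by positivity) hW
      rw [if_neg hz]
      have h3 : h * (1 + Real.log (Z + t * h)) ≤ 2 * (1 + Real.log (M + 1)) := by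
        have h4 : h * (1 + Real.log (Z + t * h)) ≤ h * (1 + Real.log (M + 1)) := by nlinarith
        nlinarith
      have h6 : t * (h * (1 + Real.log (Z + t * h))) ≤ t * (2 * (1 + Real.log (M + 1))) :=
        mul_le_mul_of_nonneg_left h3 ht.le
      have h7 := mul_nonneg ht.le hld
      nlinarith

lemma pos_level (hε : 0 < ε) (hc : Measurable fun p : X × Y => c p.1 p.2)
    (hc0 : ∀ x y, 0 ≤ c x y)
    {Z : X × Y → ℝ} (hZ : Feas c μ ν Z) (hmin : ∀ W, Feas c μ ν W → J c ε μ ν Z ≤ J c ε μ ν W)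
    {δ M : ℝ} (hδ : 0 < δ) (hM : 0 ≤ M) :
    ∀ᵐ q ∂((μ.prod ν).prod (μ.prod ν)),
      (∀ z ∈ ({q.1, q.2, T3 q, T4 q} : Set (X × Y)), Z z ≤ M ∧ c z.1 z.2 ≤ M) →
      δ ≤ Z q.1 → δ ≤ Z q.2 → Z (T3 q) ≠ 0 := by
  classical
  set C : Set (X × Y) := {z | Z z ≤ M ∧ c z.1 z.2 ≤ M} with hCdef
  set D : Set (X × Y) := {z | δ ≤ Z z} with hDdef
  set A : Set (X × Y) := {z | Z z = 0} with hAdef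
  have hC : MeasurableSet C :=
    (measurableSet_le hZ.meas measurable_const).inter (measurableSet_le hc measurable_const)
  have hD : MeasurableSet D := measurableSet_le measurable_const hZ.meas
  have hA : MeasurableSet A := measurableSet_eq_fun hZ.meas measurable_const
  set B := C ∩ D with hBdef
  have hB : MeasurableSet B := hC.inter hD
  set S : Set ((X × Y) × (X × Y)) :=
    ((Prod.fst ⁻¹' B ∩ Prod.snd ⁻¹' B) ∩ T3 ⁻¹' (C ∩ A)) ∩ T4 ⁻¹' C with hSdef
  have hS : MeasurableSet S :=
    (((measurable_fst hB).inter (measurable_snd hB)).inter (measurable_T3 (hC.inter hA))).inter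
      (measurable_T4 hC)
  obtain ⟨h, hm, h2, hn, hp, H⟩ := exists_swap (μ := μ) (ν := ν) hS hB hC
    (fun q hq => hq.1.1.1) (fun q hq => hq.1.1.2) (fun q hq => hq.1.2.1) (fun q hq => hq.2)
  have hmarg := swap_marg (μ := μ) (ν := ν) (S := S) (h := h) fun ψ hψ K hK =>
    (H ψ hψ K fun z _ => hK z).2.2
  have hi : Integrable h (μ.prod ν) := int_of_bdd hm h2
  have Hc := H _ hc M (fun z hz => by
    rw [abs_of_nonneg (hc0 _ _)]
    rcases hz with hz | hz
    · exact hz.1.2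
    · exact hz.2)
  set φ : X × Y → ℝ := fun z => if Z z = 0 then 1 else 0 with hφ
  have hφm : Measurable φ := Measurable.ite hA measurable_const measurable_const
  have hφ0 : ∀ z, 0 ≤ φ z := fun z => by simp only [hφ]; split_ifs <;> norm_num
  have HA := H φ hφm 1 (fun z _ => by simp only [hφ]; split_ifs <;> norm_num)
  set I0 := ∫ z, φ z * h z ∂(μ.prod ν) with hI0
  have hI : ((μ.prod ν).prod (μ.prod ν)).real S ≤ I0 := by
    rw [HA.2.2]
    have e : ((μ.prod ν).prod (μ.prod ν)).real S
        = ∫ q in S, (1 : ℝ) ∂((μ.prod ν).prod (μ.prod ν)) := by simp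
    rw [e]
    refine setIntegral_mono_on (integrable_const _) HA.2.1 hS fun q hq => ?_
    have a1 : φ q.1 = 0 := if_neg (hδ.trans_le hq.1.1.1.2).ne'
    have a2 : φ q.2 = 0 := if_neg (hδ.trans_le hq.1.1.2.2).ne'
    have a3 : φ (T3 q) = 1 := if_pos hq.1.2.2
    simp only [Br, a1, a2, a3]
    linarith [hφ0 (T4 q)]
  set K0 := 2 * (1 + Real.log (M + 1)) + 2 * (1 + |Real.log (δ / 2)|) with hK0
  have hK0p : 0 ≤ K0 := by
    have : 0 ≤ Real.log (M + 1) := Real.log_nonneg (by linarith)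
    positivity
  set a := ∫ z, c z.1 z.2 * h z ∂(μ.prod ν) with ha
  have main : ∀ t, 0 < t → t ≤ δ / 4 → t < 1 / 2 →
      0 ≤ a + ε * (I0 * Real.log (2 * t) + K0) := by
    intro t ht htδ ht2
    have hsum : Integrable (fun z => φ z * h z * Real.log (2 * t)) (μ.prod ν) :=
      HA.1.mul_const _
    have hV := variational hε hZ hmin (h := h)
      (G := fun z => φ z * h z * Real.log (2 * t) + K0) hm hi hmarg.1 hmarg.2 ht
      (fun z => by
        rcases lt_or_ge (h z) 0 with hz | hz
        · have h3 : δ ≤ Z z := (hn z hz).2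
          have h4 := (abs_le.1 (h2 z)).1
          nlinarith
        · have := hZ.nonneg z
          positivity)
      Hc.1 (hsum.add (integrable_const _))
      (fun z => pos_pert hδ hM (hZ.nonneg z) (h2 z) ht htδ ht2 (fun hz => (hn z hz).2)
        (fun hz => (hp z hz).1))
    rw [integral_add hsum (integrable_const _), integral_mul_const, integral_const,
      probReal_univ, one_smul] at hV
    exact hV
  have hI0' : I0 ≤ 0 := by
    by_contra hcon
    push Not at hcon
    set R := (|a| + ε * K0 + 1) / (ε * I0) with hR
    have hRp : 0 < R := by positivity
    have he1 : Real.exp (-R) < 1 := by rw [← Real.exp_zero]; exact Real.exp_lt_exp.2 (by linarith)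
    have htp : 0 < min (δ / 4) (Real.exp (-R) / 2) := lt_min (by positivity) (by positivity)
    have hte : min (δ / 4) (Real.exp (-R) / 2) ≤ Real.exp (-R) / 2 := min_le_right _ _
    have h3 := main (min (δ / 4) (Real.exp (-R) / 2)) htp (min_le_left _ _) (by linarith)
    have h4 : Real.log (2 * min (δ / 4) (Real.exp (-R) / 2)) ≤ -R := by
      refine (Real.log_le_log (by linarith) (?_ : _ ≤ Real.exp (-R))).trans
        (Real.log_exp (-R)).le
      linarith
    have h5 : ε * I0 * R = |a| + ε * K0 + 1 := by rw [hR]; field_simp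
    have h6 := mul_le_mul_of_nonneg_left h4 (mul_pos hε hcon).le
    have h7 := le_abs_self a
    nlinarith
  have hS0 : ((μ.prod ν).prod (μ.prod ν)) S = 0 := by
    have h1 : ((μ.prod ν).prod (μ.prod ν)).real S = 0 :=
      le_antisymm (hI.trans hI0') measureReal_nonneg
    exact (measureReal_eq_zero_iff).1 h1
  filter_upwards [measure_eq_zero_iff_ae_notMem.1 hS0] with q hq hqC hd1 hd2 h3
  exact hq ⟨⟨⟨⟨hqC _ (by simp), hd1⟩, ⟨hqC _ (by simp), hd2⟩⟩, ⟨hqC _ (by simp), h3⟩⟩,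
    hqC _ (by simp)⟩

lemma level4 (c : X → Y → ℝ) (Z : X × Y → ℝ) (q : (X × Y) × (X × Y)) :
    ∃ N : ℕ, ∀ n : ℕ, N ≤ n →
      ∀ z ∈ ({q.1, q.2, T3 q, T4 q} : Set (X × Y)),
        (Z z ≤ n + 1 ∧ c z.1 z.2 ≤ n + 1) ∧ (0 < Z z → 1 / ((n : ℝ) + 1) ≤ Z z) := by
  have h1 : ∀ z : X × Y, ∀ᶠ n : ℕ in atTop, (Z z ≤ n + 1 ∧ c z.1 z.2 ≤ n + 1) ∧
      (0 < Z z → 1 / ((n : ℝ) + 1) ≤ Z z) := by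
    intro z
    have hT : Tendsto (fun n : ℕ => (n : ℝ) + 1) atTop atTop :=
      tendsto_atTop_add_const_right _ _ tendsto_natCast_atTop_atTop
    have h3 : ∀ᶠ n : ℕ in atTop, (0 < Z z → 1 / ((n : ℝ) + 1) ≤ Z z) := by
      by_cases h : 0 < Z z
      · filter_upwards [(tendsto_one_div_add_atTop_nhds_zero_nat (𝕜 := ℝ)).eventually
          (eventually_lt_nhds h)] with n hn _
        exact hn.le
      · exact Eventually.of_forall fun n h' => absurd h' h
    exact ((hT.eventually_ge_atTop _).and (hT.eventually_ge_atTop _)).and h3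
  obtain ⟨N, hN⟩ := eventually_atTop.1
    ((h1 q.1).and ((h1 q.2).and ((h1 (T3 q)).and (h1 (T4 q)))))
  refine ⟨N, fun n hn z hz => ?_⟩
  obtain ⟨a, b, d, e⟩ := hN n hn
  simp only [mem_insert_iff, mem_singleton_iff] at hz
  rcases hz with rfl | rfl | rfl | rfl <;> assumption

lemma pos_quad (hε : 0 < ε) (hc : Measurable fun p : X × Y => c p.1 p.2)
    (hc0 : ∀ x y, 0 ≤ c x y)
    {Z : X × Y → ℝ} (hZ : Feas c μ ν Z)
    (hmin : ∀ W, Feas c μ ν W → J c ε μ ν Z ≤ J c ε μ ν W) :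
    ∀ᵐ q ∂((μ.prod ν).prod (μ.prod ν)), 0 < Z q.1 → 0 < Z q.2 → 0 < Z (T3 q) := by
  have h := ae_all_iff.2 fun n : ℕ => pos_level hε hc hc0 hZ hmin
    (δ := 1 / ((n : ℝ) + 1)) (M := (n : ℝ) + 1) (by positivity) (by positivity)
  filter_upwards [h] with q hq h1 h2
  obtain ⟨N, hN⟩ := level4 c Z q
  have := hN N le_rfl
  refine lt_of_le_of_ne (hZ.nonneg _) (Ne.symm ?_)
  exact hq N (fun z hz => (this z hz).1) ((this q.1 (by simp)).2 h1) ((this q.2 (by simp)).2 h2)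

lemma marg_freq {Z : X × Y → ℝ} (hm : Measurable Z) (h0 : ∀ z, 0 ≤ Z z)
    (hA : ∀ A : Set X, MeasurableSet A → ∫ z in Prod.fst ⁻¹' A, Z z ∂(μ.prod ν) = μ.real A) :
    ∀ᵐ x ∂μ, ∃ᶠ y in ae ν, 0 < Z (x, y) := by
  set A : Set X := {x | ν (Prod.mk x ⁻¹' {z | 0 < Z z}) = 0} with hAd
  have hpm : MeasurableSet {z | 0 < Z z} := measurableSet_lt measurable_const hm
  have hAm : MeasurableSet A :=
    (measurable_measure_prodMk_left hpm) (measurableSet_singleton 0)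
  have hz : (μ.prod ν) ({z | 0 < Z z} ∩ Prod.fst ⁻¹' A) = 0 := by
    rw [Measure.measure_prod_null (hpm.inter (measurable_fst hAm))]
    refine ae_of_all _ fun x => ?_
    by_cases hx : x ∈ A
    · exact measure_mono_null (fun y hy => hy.1) hx
    · simp only [Pi.zero_apply]
      convert measure_empty (μ := ν)
      ext y
      simp [hx]
  have h1 : ∫ z in Prod.fst ⁻¹' A, Z z ∂(μ.prod ν) = 0 := by
    refine setIntegral_eq_zero_of_ae_eq_zero ?_
    filter_upwards [measure_eq_zero_iff_ae_notMem.1 hz] with z hz hzA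
    by_contra hne
    exact hz ⟨lt_of_le_of_ne (h0 z) (Ne.symm hne), hzA⟩
  rw [hA A hAm, measureReal_eq_zero_iff] at h1
  filter_upwards [measure_eq_zero_iff_ae_notMem.1 h1] with x hx
  rw [Filter.Frequently]
  intro hcon
  apply hx
  have : ν {y | ¬ ¬ 0 < Z (x, y)} = 0 := hcon
  simpa [hAd] using this

lemma pos_ae (hε : 0 < ε) (hc : Measurable fun p : X × Y => c p.1 p.2)
    (hc0 : ∀ x y, 0 ≤ c x y)
    {Z : X × Y → ℝ} (hZ : Feas c μ ν Z)
    (hmin : ∀ W, Feas c μ ν W → J c ε μ ν Z ≤ J c ε μ ν W) :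
    ∀ᵐ z ∂(μ.prod ν), 0 < Z z := by
  obtain ⟨-, ha, hb⟩ := (coupling_iff hZ.meas hZ.nonneg).1 hZ.cpl
  have hx := marg_freq (μ := μ) (ν := ν) hZ.meas hZ.nonneg ha
  have hy := marg_freq (μ := ν) (ν := μ) (Z := fun z => Z z.swap)
    (hZ.meas.comp measurable_swap) (fun z => hZ.nonneg _) (fun B hB => by
      rw [← hb B hB]
      have := (Measure.measurePreserving_swap (μ := ν) (ν := μ)).setIntegral_preimage_emb
        (MeasurableEquiv.prodComm (α := Y) (β := X)).measurableEmbedding Z (Prod.snd ⁻¹' B)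
      exact this)
  have hq := Measure.ae_ae_of_ae_prod (pos_quad hε hc hc0 hZ hmin)
  have hq1 := Measure.ae_ae_of_ae_prod hq
  have hm : MeasurableSet {z | 0 < Z z} := measurableSet_lt measurable_const hZ.meas
  refine (Measure.ae_prod_iff_ae_ae hm).2 ?_
  filter_upwards [hx, hq1] with x hx1 hx2
  obtain ⟨y, hy1, hy2⟩ := (hx1.and_eventually hx2).exists
  have h3 := (Measure.measurePreserving_swap (μ := ν) (ν := μ)).quasiMeasurePreserving.ae hy2
  have h4 := Measure.ae_ae_of_ae_prod h3
  filter_upwards [hy, h4] with y' h5 h6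
  obtain ⟨x', h7, h8⟩ := (h5.and_eventually h6).exists
  exact h8 hy1 h7

lemma br_zero (hε : 0 < ε) (hc : Measurable fun p : X × Y => c p.1 p.2)
    (hc0 : ∀ x y, 0 ≤ c x y)
    {Z : X × Y → ℝ} (hZ : Feas c μ ν Z)
    (hmin : ∀ W, Feas c μ ν W → J c ε μ ν Z ≤ J c ε μ ν W) :
    ∀ᵐ q ∂((μ.prod ν).prod (μ.prod ν)), Br (Lf c ε Z) q = 0 := by
  have hp := pos_ae hε hc hc0 hZ hmin
  have h1 := ae_all_iff.2 fun n : ℕ => foc_level hε hc hc0 hZ hmin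
    (δ := 1 / ((n : ℝ) + 1)) (M := (n : ℝ) + 1) (by positivity) (s := 1) (by simp)
  have h2 := ae_all_iff.2 fun n : ℕ => foc_level hε hc hc0 hZ hmin
    (δ := 1 / ((n : ℝ) + 1)) (M := (n : ℝ) + 1) (by positivity) (s := -1) (by simp)
  filter_upwards [h1, h2, (mp1 (μ := μ) (ν := ν)).quasiMeasurePreserving.ae hp,
    (mp2 (μ := μ) (ν := ν)).quasiMeasurePreserving.ae hp,
    (mp3 (μ := μ) (ν := ν)).quasiMeasurePreserving.ae hp,
    (mp4 (μ := μ) (ν := ν)).quasiMeasurePreserving.ae hp] with q a b p1 p2 p3 p4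
  obtain ⟨N, hN⟩ := level4 c Z q
  have hh : ∀ z ∈ ({q.1, q.2, T3 q, T4 q} : Set (X × Y)), 1 / ((N : ℝ) + 1) ≤ Z z ∧
      Z z ≤ (N : ℝ) + 1 ∧ c z.1 z.2 ≤ (N : ℝ) + 1 := by
    intro z hz
    have h3 := hN N le_rfl z hz
    refine ⟨h3.2 ?_, h3.1⟩
    simp only [mem_insert_iff, mem_singleton_iff] at hz
    rcases hz with rfl | rfl | rfl | rfl <;> assumption
  have a' := a N hh
  have b' := b N hh
  linarith

lemma min_cycl (hε : 0 < ε) (hc : Measurable fun p : X × Y => c p.1 p.2)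
    (hc0 : ∀ x y, 0 ≤ c x y)
    {Z : X × Y → ℝ} (hZ : Feas c μ ν Z)
    (hmin : ∀ W, Feas c μ ν W → J c ε μ ν Z ≤ J c ε μ ν W) :
    IsCyclInvariant c ε μ ν ((μ.prod ν).withDensity fun z => ENNReal.ofReal (Z z)) := by
  have hp := pos_ae hε hc hc0 hZ hmin
  have hb := Measure.ae_ae_of_ae_prod (br_zero hε hc hc0 hZ hmin)
  obtain ⟨⟨x, y⟩, hxy⟩ := hb.exists
  have hLm : Measurable (Lf c ε Z) := hc.add (hZ.meas.log.const_mul ε)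
  refine cycl_of_density (f := fun x' => Lf c ε Z (x', y) / ε)
    (g := fun y' => (Lf c ε Z (x, y') - Lf c ε Z (x, y)) / ε) hc
    ((hLm.comp (measurable_id.prodMk measurable_const)).div_const ε)
    (((hLm.comp (measurable_const.prodMk measurable_id)).sub_const _).div_const ε) hZ.cpl ?_
  refine withDensity_congr_ae ?_
  filter_upwards [hp, hxy] with z hz h1
  congr 1
  simp only [Br, T3, T4] at h1
  have h2 : Lf c ε Z (z.1, y) / ε + (Lf c ε Z (x, z.2) - Lf c ε Z (x, y)) / ε
      - 1 / ε * c z.1 z.2 = Real.log (Z z) := by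
    have h3 : Lf c ε Z z = c z.1 z.2 + ε * Real.log (Z z) := rfl
    field_simp
    linarith
  rw [h2, Real.exp_log hz]

end Posit

section Statement

variable {X Y : Type*}
  [MeasurableSpace X] [TopologicalSpace X] [PolishSpace X] [BorelSpace X]
  [MeasurableSpace Y] [TopologicalSpace Y] [PolishSpace Y] [BorelSpace Y]

/-- under finiteness, cyclical invariance ⟺ minimality, and
there exists a unique such coupling. -/
theorem stmt1 (μ : Measure X) (ν : Measure Y)
    [IsProbabilityMeasure μ] [IsProbabilityMeasure ν]
    (c : X → Y → ℝ) (hc : Measurable fun p : X × Y => c p.1 p.2) (hc0 : ∀ x y, 0 ≤ c x y)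
    (ε : ℝ) (hε : 0 < ε)
    (hfin : ∃ π, IsCoupling μ ν π ∧
      (transportCost c π : EReal) + relEntropy π (μ.prod ν) ≠ ⊤) :
    (∀ π, IsCoupling μ ν π →
      (IsCyclInvariant c ε μ ν π ↔
        ∀ π', IsCoupling μ ν π' → eotObj c ε μ ν π ≤ eotObj c ε μ ν π')) ∧
    ∃! π : Measure (X × Y), IsCyclInvariant c ε μ ν π := by
  have hmin_obj : ∀ Z, Feas c μ ν Z → (∀ W, Feas c μ ν W → J c ε μ ν Z ≤ J c ε μ ν W) →
      ∀ π', IsCoupling μ ν π' →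
        eotObj c ε μ ν ((μ.prod ν).withDensity fun z => ENNReal.ofReal (Z z))
          ≤ eotObj c ε μ ν π' := by
    intro Z hZ hm π' hπ'
    by_cases htop : eotObj c ε μ ν π' = ⊤
    · rw [htop]; exact le_top
    · obtain ⟨h1, h2⟩ := ne_top_of_add_ne_top hε (relEntropy_ne_bot _ _) htop
      obtain ⟨W, hW, rfl⟩ := feas_of_ne_top hc hc0 hπ' h1 h2
      rw [eotObj_wd hc hc0 hZ, eotObj_wd hc hc0 hW]
      exact EReal.coe_le_coe_iff.2 (hm W hW)
  have hne : ∃ Z, Feas c μ ν Z := by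
    obtain ⟨π, hπ, h⟩ := hfin
    obtain ⟨h1, h2⟩ := ne_top_of_add_ne_top (r := 1) one_pos (relEntropy_ne_bot _ _)
      (by simpa using h)
    obtain ⟨Z, hZ, -⟩ := feas_of_ne_top hc hc0 hπ h1 h2
    exact ⟨Z, hZ⟩
  obtain ⟨Z₀, hZ₀, hm₀⟩ := exists_min hc hc0 hε hne
  have hcyc := min_cycl hε hc hc0 hZ₀ hm₀
  refine ⟨fun π hπ => ⟨fun h => ?_, fun h => ?_⟩, _, hcyc, fun π h => cycl_unique hc h hcyc⟩
  · rw [cycl_unique hc h hcyc]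
    exact hmin_obj Z₀ hZ₀ hm₀
  · have htop : eotObj c ε μ ν π ≠ ⊤ := by
      refine ne_top_of_le_ne_top ?_ (h _ hZ₀.cpl)
      rw [eotObj_wd hc hc0 hZ₀]
      exact EReal.coe_ne_top _
    obtain ⟨h1, h2⟩ := ne_top_of_add_ne_top hε (relEntropy_ne_bot _ _) htop
    obtain ⟨Z, hZ, rfl⟩ := feas_of_ne_top hc hc0 hπ h1 h2
    refine min_cycl hε hc hc0 hZ fun W hW => ?_
    have h3 := h _ hW.cpl
    rw [eotObj_wd hc hc0 hZ, eotObj_wd hc hc0 hW] at h3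
    exact EReal.coe_le_coe_iff.1 h3

end Statement

end EOT
end
end

section
/- Let k ≥ 2, 0 ≤ δ ≤ δ' ≤ ∞, and define A_k(δ,δ') as the set of k-tuples ((x_1,y_1),…,(x_k,y_k)) ∈ (X×Y)^k satisfying δ ≤ Σ_{i=1}^k c(x_i,y_i) − Σ_{i=1}^k c(x_i,y_{i+1}) ≤ δ' (with y_{k+1} := y_1). Let A ⊂ A_k(δ,δ') be Borel and let π_ε^k denote the k-fold product measure of π_ε with itself. Then: (i) π_ε^k(A) ≤ e^{−δ/ε} for all ε > 0; (ii) if the reflected set Ā := {((x_1,y_2),(x_2,y_3),…,(x_k,y_1)) : ((x_1,y_1),…,(x_k,y_k)) ∈ A} satisfies liminf_{ε→0} ε log π_ε^k(Ā) = 0, then liminf_{ε→0} ε log π_ε^k(A) ≥ −δ'. -/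
open MeasureTheory Filter Topology Set
open scoped ENNReal

noncomputable section

namespace EOT

variable {X Y : Type*}

section Helpers

/-- The reflection map as a measurable equivalence. -/
def reflEquiv (X Y : Type*) [MeasurableSpace X] [MeasurableSpace Y] (k : ℕ) :
    (Fin (k + 2) → X × Y) ≃ᵐ (Fin (k + 2) → X × Y) where
  toFun f i := ((f i).1, (f (i + 1)).2)
  invFun f i := ((f i).1, (f (i - 1)).2)
  left_inv f := by ext i <;> simp
  right_inv f := by ext i <;> simp
  measurable_toFun := by
    change Measurable fun (f : Fin (k + 2) → X × Y) (i : Fin (k + 2)) => ((f i).1, (f (i + 1)).2)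
    fun_prop
  measurable_invFun := by
    change Measurable fun (f : Fin (k + 2) → X × Y) (i : Fin (k + 2)) => ((f i).1, (f (i - 1)).2)
    fun_prop

theorem reflEquiv_preserving {X Y : Type*} [MeasurableSpace X] [MeasurableSpace Y] (k : ℕ)
    (μ : Measure X) (ν : Measure Y) [IsProbabilityMeasure μ] [IsProbabilityMeasure ν] :
    MeasurePreserving (reflEquiv X Y k) (Measure.pi fun _ => μ.prod ν)
      (Measure.pi fun _ => μ.prod ν) := by
  have h1 := measurePreserving_arrowProdEquivProdArrow X Y (Fin (k + 2)) (fun _ => μ) (fun _ => ν)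
  have h2 := measurePreserving_arrowCongr' (fun _ : Fin (k + 2) => ν) (fun _ : Fin (k + 2) => ν)
    (Equiv.addRight (1 : Fin (k + 2))).symm (MeasurableEquiv.refl Y)
    (fun _ => MeasurePreserving.id ν)
  have h3 := (MeasurePreserving.id (Measure.pi fun _ : Fin (k + 2) => μ)).prod h2
  exact (h1.symm _).comp (h3.comp h1)

theorem pi_withDensity_eq {Z ι : Type*} [MeasurableSpace Z] [Fintype ι] (P : Measure Z)
    [IsProbabilityMeasure P] (g : Z → ℝ≥0∞) (hg : Measurable g)
    [IsProbabilityMeasure (P.withDensity g)] :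
    (Measure.pi fun _ : ι => P.withDensity g) =
      (Measure.pi fun _ : ι => P).withDensity (fun f => ∏ i, g (f i)) := by
  classical
  refine Measure.pi_eq fun s hs => ?_
  rw [withDensity_apply _ (MeasurableSet.univ_pi hs), ← lintegral_indicator (MeasurableSet.univ_pi hs)]
  have hm : ∀ i, Measurable ((s i).indicator g) := fun i => hg.indicator (hs i)
  have e : (Set.univ.pi s).indicator (fun f : ι → Z => ∏ i, g (f i)) =
      fun f => ∏ i, (s i).indicator g (f i) := by
    funext f
    by_cases hf : f ∈ Set.univ.pi s
    · rw [indicator_of_mem hf]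
      exact Finset.prod_congr rfl fun i _ => (indicator_of_mem (hf i (mem_univ i)) g).symm
    · rw [indicator_of_notMem hf]
      simp only [Set.mem_pi, mem_univ, true_implies, not_forall] at hf
      obtain ⟨i, hi⟩ := hf
      exact (Finset.prod_eq_zero (Finset.mem_univ i) (indicator_of_notMem hi g)).symm
  rw [e]
  have hind := ProbabilityTheory.iIndepFun_pi (μ := fun _ : ι => P)
    (X := fun i => (s i).indicator g) (fun i => (hm i).aemeasurable)
  have h := ProbabilityTheory.lintegral_prod_eq_prod_lintegral_of_indepFun Finset.univ
    (fun i (f : ι → Z) => (s i).indicator g (f i)) hind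
    (fun i => (hm i).comp (measurable_pi_apply i))
  rw [h]
  refine Finset.prod_congr rfl fun i _ => ?_
  rw [(measurePreserving_eval (fun _ : ι => P) i).lintegral_comp (hm i),
    lintegral_indicator (hs i), withDensity_apply _ (hs i)]

/-- Key change of variables. -/
theorem pi_eq_lintegral {X Y : Type*} [MeasurableSpace X] [MeasurableSpace Y]
    (μ : Measure X) (ν : Measure Y) [IsProbabilityMeasure μ] [IsProbabilityMeasure ν]
    (c : X → Y → ℝ) (π : Measure (X × Y)) [IsProbabilityMeasure π] (ε : ℝ)
    (h : IsCyclInvariant c ε μ ν π) (k : ℕ) (A : Set (Fin (k + 2) → X × Y)) (hA : MeasurableSet A) :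
    ∃ G : (Fin (k + 2) → X × Y) → ℝ≥0∞, Measurable G ∧
    (Measure.pi fun _ : Fin (k + 2) => π) A = 
      ∫⁻ f in A, ENNReal.ofReal (Real.exp (-(1 / ε) * ((∑ i, c (f i).1 (f i).2) -
        ∑ i, c (f i).1 (f (i + 1)).2))) * G f ∂(Measure.pi fun _ => μ.prod ν) ∧
    (Measure.pi fun _ : Fin (k + 2) => π)
      ((fun f (i : Fin (k + 2)) => ((f i).1, (f (i + 1)).2)) '' A) =
      ∫⁻ f in A, G f ∂(Measure.pi fun _ => μ.prod ν) := by
  obtain ⟨-, D, hD, hpos, rfl, hcyc⟩ := h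
  have hg : Measurable fun z => ENNReal.ofReal (D z) := hD.ennreal_ofReal
  have hG : Measurable fun f : Fin (k + 2) → X × Y => ∏ i, ENNReal.ofReal (D (f i)) :=
    Finset.measurable_prod _ fun i _ => hg.comp (measurable_pi_apply i)
  refine ⟨fun f => ∏ i, ENNReal.ofReal (D (reflEquiv X Y k f i)),
    hG.comp (reflEquiv X Y k).measurable, ?_, ?_⟩
  · rw [pi_withDensity_eq _ _ hg, withDensity_apply _ hA]
    refine lintegral_congr fun f => ?_
    beta_reduce
    have := hcyc (k + 1) (fun i => (f i).1) (fun i => (f i).2)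
    rw [← ENNReal.ofReal_prod_of_nonneg fun i _ => (hpos _).le,
      ← ENNReal.ofReal_prod_of_nonneg fun i _ => (hpos _).le,
      ← ENNReal.ofReal_mul (Real.exp_pos _).le]
    exact congrArg _ this
  · rw [pi_withDensity_eq _ _ hg]
    have hR : (fun (f : Fin (k + 2) → X × Y) (i : Fin (k + 2)) => ((f i).1, (f (i + 1)).2)) =
        reflEquiv X Y k := rfl
    rw [hR]
    rw [withDensity_apply _ ((reflEquiv X Y k).measurableSet_image.2 hA),
      ← (reflEquiv_preserving k μ ν).setLIntegral_comp_preimage_emb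
        (reflEquiv X Y k).measurableEmbedding, (reflEquiv X Y k).injective.preimage_image]

end Helpers

section Statement

variable {X Y : Type*}
  [MeasurableSpace X] [MetricSpace X] [PolishSpace X] [BorelSpace X]
  [MeasurableSpace Y] [MetricSpace Y] [PolishSpace Y] [BorelSpace Y]

/-- the basic exponential bound obtained by integrating cyclical invariance. -/
theorem stmt2 (μ : Measure X) (ν : Measure Y)
    [IsProbabilityMeasure μ] [IsProbabilityMeasure ν]
    (c : X → Y → ℝ) (hc : Measurable fun p : X × Y => c p.1 p.2) (hc0 : ∀ x y, 0 ≤ c x y)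
    (πε : ℝ → Measure (X × Y)) [∀ ε, IsProbabilityMeasure (πε ε)]
    (hπε : ∀ ε, 0 < ε → IsCyclInvariant c ε μ ν (πε ε))
    (k : ℕ) (δ : ℝ) (δ' : EReal) (hδ0 : 0 ≤ δ) (hδδ' : (δ : EReal) ≤ δ')
    (A : Set (Fin (k + 2) → X × Y)) (hA : MeasurableSet A)
    (hAsub : ∀ f ∈ A,
      δ ≤ (∑ i, c (f i).1 (f i).2) - (∑ i, c (f i).1 (f (i + 1)).2) ∧
      (((∑ i, c (f i).1 (f i).2) - (∑ i, c (f i).1 (f (i + 1)).2) : ℝ) : EReal) ≤ δ') :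
    (∀ ε, 0 < ε →
      (Measure.pi fun _ : Fin (k + 2) => πε ε) A ≤ ENNReal.ofReal (Real.exp (-δ / ε))) ∧
    ((liminf (fun (ε : ℝ) => (ε : EReal) * ENNReal.log
          ((Measure.pi fun _ : Fin (k + 2) => πε ε)
            ((fun f (i : Fin (k + 2)) => ((f i).1, (f (i + 1)).2)) '' A)))
          (𝓝[>] (0 : ℝ)) = 0) →
      -δ' ≤ liminf (fun (ε : ℝ) => (ε : EReal) * ENNReal.log
          ((Measure.pi fun _ : Fin (k + 2) => πε ε) A)) (𝓝[>] (0 : ℝ))) := by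
  refine ⟨fun ε hε => ?_, fun hlim => ?_⟩
  · obtain ⟨G, hG, h1, h2⟩ := pi_eq_lintegral μ ν c (πε ε) ε (hπε ε hε) k A hA
    rw [h1]
    calc _ ≤ ∫⁻ f in A, ENNReal.ofReal (Real.exp (-δ / ε)) * G f
            ∂(Measure.pi fun _ => μ.prod ν) := by
          refine setLIntegral_mono (hG.const_mul _) fun f hf => ?_
          gcongr
          have := (hAsub f hf).1
          have h3 : -δ / ε = -(1 / ε) * δ := by ring
          rw [h3, neg_mul, neg_mul]
          exact neg_le_neg (mul_le_mul_of_nonneg_left this (by positivity))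
      _ ≤ ENNReal.ofReal (Real.exp (-δ / ε)) * 1 := by
          rw [lintegral_const_mul _ hG, ← h2]
          gcongr
          exact prob_le_one
      _ = _ := mul_one _
  · induction δ' with
    | bot => exact absurd hδδ' (by simp)
    | top => simp
    | coe d =>
      have key : ∀ᶠ ε : ℝ in 𝓝[>] 0, ((-d : ℝ) : EReal) + (ε : EReal) * ENNReal.log
          ((Measure.pi fun _ : Fin (k + 2) => πε ε)
            ((fun f (i : Fin (k + 2)) => ((f i).1, (f (i + 1)).2)) '' A)) ≤
          (ε : EReal) * ENNReal.log ((Measure.pi fun _ : Fin (k + 2) => πε ε) A) := by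
        filter_upwards [self_mem_nhdsWithin] with ε hε
        have hε : 0 < ε := hε
        obtain ⟨G, hG, h1, h2⟩ := pi_eq_lintegral μ ν c (πε ε) ε (hπε ε hε) k A hA
        have h4 : ENNReal.ofReal (Real.exp (-d / ε)) * (Measure.pi fun _ : Fin (k + 2) => πε ε)
            ((fun f (i : Fin (k + 2)) => ((f i).1, (f (i + 1)).2)) '' A) ≤
            (Measure.pi fun _ : Fin (k + 2) => πε ε) A := by
          rw [h1, h2, ← lintegral_const_mul _ hG]
          refine setLIntegral_mono' hA fun f hf => ?_
          gcongr
          have := EReal.coe_le_coe_iff.1 (hAsub f hf).2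
          have h3 : -d / ε = -(1 / ε) * d := by ring
          rw [h3, neg_mul, neg_mul]
          exact neg_le_neg (mul_le_mul_of_nonneg_left this (by positivity))
        have h5 := ENNReal.log_le_log h4
        rw [ENNReal.log_mul_add, ENNReal.log_ofReal_of_pos (Real.exp_pos _), Real.log_exp] at h5
        have h6 := mul_le_mul_of_nonneg_left h5 (EReal.coe_nonneg.2 hε.le)
        rw [EReal.left_distrib_of_nonneg_of_ne_top (EReal.coe_nonneg.2 hε.le) (EReal.coe_ne_top _),
          ← EReal.coe_mul, mul_div_cancel₀ _ hε.ne'] at h6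
        exact h6
      refine le_trans ?_ (liminf_le_liminf key)
      refine le_trans ?_ EReal.le_liminf_add
      rw [hlim, liminf_const]
      simp


end Statement

end EOT
end
end

section
/- Let c be continuous and let π be a weak cluster point of the family (π_ε) as ε → 0. Then the support of π is c-cyclically monotone; consequently, π is an optimal transport whenever the optimal transport problem inf_{π'∈Π(μ,ν)} ∫ c dπ' is finite. If moreover Π(μ,ν) contains a unique coupling π_* with c-cyclically monotone support, then π_ε converges weakly to π_* as ε → 0. -/
open MeasureTheory Filter Topology Set
open scoped ENNReal

noncomputable section

namespace EOT

variable {X Y : Type*}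

section Statement

variable {X Y : Type*}
  [MeasurableSpace X] [MetricSpace X] [PolishSpace X] [BorelSpace X]
  [MeasurableSpace Y] [MetricSpace Y] [PolishSpace Y] [BorelSpace Y]

lemma measurePreserving_shift (k : ℕ) (μ : Measure X) (ν : Measure Y)
    [IsProbabilityMeasure μ] [IsProbabilityMeasure ν] :
    MeasurePreserving (fun (w : Fin (k + 1) → X × Y) i => ((w i).1, (w (i + 1)).2))
      (Measure.pi fun _ : Fin (k + 1) => μ.prod ν) (Measure.pi fun _ : Fin (k + 1) => μ.prod ν) := by
  have h1 := measurePreserving_arrowProdEquivProdArrow X Y (Fin (k + 1)) (fun _ => μ) (fun _ => ν)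
  have h2 := measurePreserving_piCongrLeft (α := fun _ : Fin (k + 1) => Y) (fun _ => ν)
    (Equiv.addRight (1 : Fin (k + 1))).symm
  have h3 := (MeasurePreserving.id (Measure.pi fun _ : Fin (k + 1) => μ)).prod h2
  have h := (h1.symm.comp h3).comp h1
  convert h using 1
  funext w i
  refine Prod.ext rfl ?_
  change (w (i + 1)).2 = _
  have := MeasurableEquiv.piCongrLeft_apply_apply (Equiv.addRight (1 : Fin (k + 1))).symm
    (β := fun _ => Y) (fun j => (w j).2) (i + 1)
  rw [show (Equiv.addRight (1 : Fin (k + 1))).symm (i + 1) = i by simp] at this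
  exact this.symm

lemma shift_bound {c : X → Y → ℝ} {ε : ℝ} (hε : 0 < ε) {μ : Measure X} {ν : Measure Y}
    [IsProbabilityMeasure μ] [IsProbabilityMeasure ν] {π : Measure (X × Y)}
    (h : IsCyclInvariant c ε μ ν π) (k : ℕ) (B : Fin (k + 1) → Set (X × Y))
    (hB : ∀ i, MeasurableSet (B i)) (δ : ℝ)
    (hδ : ∀ w : Fin (k + 1) → X × Y, (∀ i, w i ∈ B i) →
      δ ≤ (∑ i, c (w i).1 (w i).2) - ∑ i, c (w i).1 (w (i + 1)).2) :
    ∏ i, π (B i) ≤ ENNReal.ofReal (Real.exp (-(δ / ε))) := by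
  obtain ⟨⟨hp, -, -⟩, D, hD, hpos, hπ, hcyc⟩ := h
  set d : X × Y → ℝ≥0∞ := fun z => ENNReal.ofReal (D z) with hd
  have hdm : Measurable d := hD.ennreal_ofReal
  have fub : ∀ g : Fin (k + 1) → X × Y → ℝ≥0∞, (∀ i, Measurable (g i)) →
      ∫⁻ w, ∏ i, g i (w i) ∂(Measure.pi fun _ : Fin (k + 1) => μ.prod ν) =
        ∏ i, ∫⁻ z, g i z ∂(μ.prod ν) := by
    intro g hg
    have hind := ProbabilityTheory.iIndepFun_pi (μ := fun _ : Fin (k + 1) => μ.prod ν)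
      (X := g) (fun i => (hg i).aemeasurable)
    rw [ProbabilityTheory.lintegral_prod_eq_prod_lintegral_of_indepFun Finset.univ _ hind
      (fun i => (hg i).comp (measurable_pi_apply i))]
    refine Finset.prod_congr rfl fun i _ => ?_
    exact (measurePreserving_eval (fun _ : Fin (k + 1) => μ.prod ν) i).lintegral_comp (hg i)
  have e1 : ∀ i, π (B i) = ∫⁻ z, (B i).indicator d z ∂(μ.prod ν) := by
    intro i
    rw [hπ, withDensity_apply _ (hB i), lintegral_indicator (hB i)]
  have e2 : ∫⁻ z, d z ∂(μ.prod ν) = 1 := by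
    have : π univ = 1 := measure_univ
    rwa [hπ, withDensity_apply _ MeasurableSet.univ, Measure.restrict_univ] at this
  simp_rw [e1]
  rw [← fub _ (fun i => hdm.indicator (hB i))]
  calc _ ≤ ∫⁻ w, ENNReal.ofReal (Real.exp (-(δ / ε))) * ∏ i, d ((w i).1, (w (i + 1)).2)
        ∂(Measure.pi fun _ : Fin (k + 1) => μ.prod ν) := by
        apply lintegral_mono
        intro w
        by_cases hw : ∀ i, w i ∈ B i
        · have : ∏ i, (B i).indicator d (w i) = ∏ i, d (w i) :=
            Finset.prod_congr rfl fun i _ => indicator_of_mem (hw i) _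
          refine this.trans_le ?_
          simp only [hd]
          rw [← ENNReal.ofReal_prod_of_nonneg (fun i _ => (hpos _).le),
            ← ENNReal.ofReal_prod_of_nonneg (fun i _ => (hpos _).le),
            ← ENNReal.ofReal_mul (Real.exp_pos _).le]
          apply ENNReal.ofReal_le_ofReal
          have := hcyc k (fun i => (w i).1) (fun i => (w i).2)
          simp only [Prod.mk.eta] at this
          rw [this]
          apply mul_le_mul_of_nonneg_right _ (Finset.prod_nonneg fun i _ => (hpos _).le)
          apply Real.exp_le_exp.2
          rw [div_eq_mul_one_div δ, mul_comm δ, neg_mul]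
          have h1 : 0 ≤ 1 / ε := by positivity
          have := mul_le_mul_of_nonneg_left (hδ w hw) h1
          linarith
        · push Not at hw
          obtain ⟨i, hi⟩ := hw
          have : ∏ i, (B i).indicator d (w i) = 0 :=
            Finset.prod_eq_zero (Finset.mem_univ i) (indicator_of_notMem hi _)
          simp only [this]
          exact zero_le
    _ = ENNReal.ofReal (Real.exp (-(δ / ε))) := by
        have hm : Measurable fun w : Fin (k + 1) → X × Y => ∏ i, d (w i) := by fun_prop
        have hs := measurePreserving_shift k μ ν
        have h1 : Measurable fun w : Fin (k + 1) → X × Y => ∏ i, d ((w i).1, (w (i + 1)).2) :=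
          hm.comp hs.measurable
        rw [lintegral_const_mul _ h1]
        have := hs.lintegral_comp hm
        rw [this, fub _ (fun _ => hdm)]
        simp [e2]

lemma cycl_of_tendsto {μ : Measure X} {ν : Measure Y}
    [IsProbabilityMeasure μ] [IsProbabilityMeasure ν]
    {c : X → Y → ℝ} (hc : Continuous fun p : X × Y => c p.1 p.2)
    {πε : ℝ → ProbabilityMeasure (X × Y)}
    (hπε : ∀ ε, 0 < ε → IsCyclInvariant c ε μ ν (πε ε : Measure (X × Y)))
    {π : ProbabilityMeasure (X × Y)} {l : Filter ℝ} [l.NeBot] (hl : l ≤ 𝓝[>] 0)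
    (hlim : Tendsto πε l (𝓝 π)) :
    CCyclMonotone c (mSupport (π : Measure (X × Y))) := by
  intro k p hp
  by_contra! hlt
  set Φ : (Fin (k + 1) → X × Y) → ℝ := fun w =>
    (∑ i, c (w i).1 (w i).2) - ∑ i, c (w i).1 (w (i + 1)).2 with hΦ
  have hΦc : Continuous Φ := by
    apply Continuous.sub <;> refine continuous_finsetSum _ fun i _ => ?_
    · exact hc.comp (continuous_apply i)
    · have h1 : Continuous fun w : Fin (k + 1) → X × Y => ((w i).1, (w (i + 1)).2) := by fun_prop
      exact hc.comp h1
  set δ := Φ p / 2 with hδ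
  have hδ0 : 0 < δ := by simp only [hδ, hΦ]; linarith
  have hO : IsOpen (Φ ⁻¹' Ioi δ) := isOpen_Ioi.preimage hΦc
  obtain ⟨B, hB, hBsub⟩ := isOpen_pi_iff'.1 hO p (by simp only [mem_preimage, mem_Ioi]; linarith)
  have hpos : ∀ i, 0 < (π : Measure (X × Y)) (B i) := fun i => hp i _ (hB i).1 (hB i).2
  have hr : ∀ i, ∃ r : ℝ≥0∞, 0 < r ∧ ∀ᶠ ε in l, r ≤ (πε ε : Measure (X × Y)) (B i) := by
    intro i
    obtain ⟨r, hr0, hr⟩ := exists_between (hpos i)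
    refine ⟨r, hr0, ?_⟩
    have := ProbabilityMeasure.le_liminf_measure_open_of_tendsto hlim (hB i).1
    exact (eventually_lt_of_lt_liminf (hr.trans_le this)).mono fun _ h => h.le
  choose r hr0 hr using hr
  have hev : ∀ᶠ ε in l, ∏ i, r i ≤ ENNReal.ofReal (Real.exp (-(δ / ε))) := by
    filter_upwards [eventually_all.2 hr, hl self_mem_nhdsWithin] with ε h1 h2
    refine (Finset.prod_le_prod' fun i _ => h1 i).trans ?_
    refine shift_bound h2 (hπε ε h2) k B (fun i => (hB i).1.measurableSet) δ ?_
    intro w hw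
    exact (hBsub (fun i _ => hw i) : δ < Φ w).le
  have ht : Tendsto (fun ε : ℝ => ENNReal.ofReal (Real.exp (-(δ / ε)))) l (𝓝 0) := by
    rw [← ENNReal.ofReal_zero]
    apply ENNReal.tendsto_ofReal
    apply Real.tendsto_exp_neg_atTop_nhds_zero.comp
    have : Tendsto (fun ε : ℝ => ε⁻¹) l atTop := tendsto_inv_nhdsGT_zero.mono_left hl
    exact this.const_mul_atTop hδ0
  have := ge_of_tendsto ht hev
  have h0 : ∏ i, r i = 0 := le_antisymm this zero_le
  rw [Finset.prod_eq_zero_iff] at h0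
  obtain ⟨i, -, hi⟩ := h0
  exact (hr0 i).ne' hi

lemma coupling_of_tendsto {μ : Measure X} {ν : Measure Y}
    [IsProbabilityMeasure μ] [IsProbabilityMeasure ν]
    {πε : ℝ → ProbabilityMeasure (X × Y)}
    (hπε : ∀ ε, 0 < ε → IsCoupling μ ν (πε ε : Measure (X × Y)))
    {π : ProbabilityMeasure (X × Y)} {l : Filter ℝ} [l.NeBot] (hl : l ≤ 𝓝[>] 0)
    (hlim : Tendsto πε l (𝓝 π)) : IsCoupling μ ν (π : Measure (X × Y)) := by
  refine ⟨inferInstance, ?_, ?_⟩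
  · have h1 : Tendsto (fun ε => (πε ε).map (f := Prod.fst) measurable_fst.aemeasurable) l
        (𝓝 (π.map measurable_fst.aemeasurable)) :=
      ProbabilityMeasure.tendsto_map_of_tendsto_of_continuous _ _ hlim continuous_fst
    have h2 : Tendsto (fun ε => (πε ε).map (f := Prod.fst) measurable_fst.aemeasurable) l
        (𝓝 (⟨μ, inferInstance⟩ : ProbabilityMeasure X)) := by
      apply tendsto_const_nhds.congr'
      filter_upwards [hl self_mem_nhdsWithin] with ε hε
      exact Subtype.ext (hπε ε hε).2.1.symm
    have h3 := tendsto_nhds_unique h1 h2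
    exact congrArg Subtype.val h3
  · have h1 : Tendsto (fun ε => (πε ε).map (f := Prod.snd) measurable_snd.aemeasurable) l
        (𝓝 (π.map measurable_snd.aemeasurable)) :=
      ProbabilityMeasure.tendsto_map_of_tendsto_of_continuous _ _ hlim continuous_snd
    have h2 : Tendsto (fun ε => (πε ε).map (f := Prod.snd) measurable_snd.aemeasurable) l
        (𝓝 (⟨ν, inferInstance⟩ : ProbabilityMeasure Y)) := by
      apply tendsto_const_nhds.congr'
      filter_upwards [hl self_mem_nhdsWithin] with ε hε
      exact Subtype.ext (hπε ε hε).2.2.symm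
    have h3 := tendsto_nhds_unique h1 h2
    exact congrArg Subtype.val h3

/-- Path costs along chains in `Γ` starting at `z₀`. -/
inductive Chain (c : X → Y → ℝ) (Γ : Set (X × Y)) (z₀ : X × Y) : X × Y → ℝ → Prop
  | base : Chain c Γ z₀ z₀ 0
  | step (p q : X × Y) (a : ℝ) (h : Chain c Γ z₀ p a) (hq : q ∈ Γ) :
      Chain c Γ z₀ q (a + c p.1 p.2 - c p.1 q.2)

lemma Chain.exists_fin {c : X → Y → ℝ} {Γ : Set (X × Y)} {z₀ : X × Y} (hz : z₀ ∈ Γ)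
    {p : X × Y} {a : ℝ} (h : Chain c Γ z₀ p a) :
    ∃ (k : ℕ) (f : Fin (k + 1) → X × Y), f 0 = z₀ ∧ f (Fin.last k) = p ∧ (∀ i, f i ∈ Γ) ∧
      a = ∑ i : Fin k, (c (f i.castSucc).1 (f i.castSucc).2 - c (f i.castSucc).1 (f i.succ).2) := by
  induction h with
  | base => exact ⟨0, fun _ => z₀, rfl, rfl, fun _ => hz, by simp⟩
  | step p q a h hq ih =>
    obtain ⟨k, f, h0, hl, hΓ, ha⟩ := ih
    refine ⟨k + 1, Fin.snoc (α := fun _ => X × Y) f q, ?_, ?_, ?_, ?_⟩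
    · rw [← h0]; exact Fin.snoc_castSucc (α := fun _ => X × Y) q f 0
    · simp
    · intro i
      refine Fin.lastCases ?_ (fun j => ?_) i
      · simpa using hq
      · simpa using hΓ j
    · rw [Fin.sum_univ_castSucc, ha]
      simp only [Fin.snoc_castSucc, ← Fin.castSucc_succ, Fin.succ_last, Fin.snoc_last, hl]
      ring

lemma Chain.close {c : X → Y → ℝ} {Γ : Set (X × Y)} (hΓ : CCyclMonotone c Γ)
    {z₀ : X × Y} (hz : z₀ ∈ Γ) {p : X × Y} {a : ℝ} (h : Chain c Γ z₀ p a) :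
    a + c p.1 p.2 - c p.1 z₀.2 ≤ 0 := by
  obtain ⟨k, f, h0, hl, hf, rfl⟩ := h.exists_fin hz
  have := hΓ k f hf
  rw [Fin.sum_univ_castSucc, Fin.sum_univ_castSucc] at this
  simp only [Fin.coeSucc_eq_succ, Fin.last_add_one, h0, hl] at this
  rw [Finset.sum_sub_distrib]
  linarith

/-- Potential on `Y`. -/
def potG (c : X → Y → ℝ) (Γ : Set (X × Y)) (z₀ : X × Y) (y : Y) : EReal :=
  ⨆ (p : X × Y) (a : ℝ) (_ : Chain c Γ z₀ p a), ((a + c p.1 p.2 - c p.1 y : ℝ) : EReal)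

/-- Potential on `X`. -/
def potF (c : X → Y → ℝ) (Γ : Set (X × Y)) (z₀ : X × Y) (x : X) : EReal :=
  ⨅ (y : Y) (_ : potG c Γ z₀ y ≠ ⊤), (((potG c Γ z₀ y).toReal + c x y : ℝ) : EReal)

lemma potG_measurable {c : X → Y → ℝ} (hc : Continuous fun p : X × Y => c p.1 p.2)
    (Γ : Set (X × Y)) (z₀ : X × Y) : Measurable (potG c Γ z₀) := by
  apply LowerSemicontinuous.measurable
  refine lowerSemicontinuous_iSup fun p => lowerSemicontinuous_iSup fun a =>
    lowerSemicontinuous_iSup fun h => Continuous.lowerSemicontinuous ?_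
  refine continuous_coe_real_ereal.comp (continuous_const.sub ?_)
  exact hc.comp (continuous_const.prodMk continuous_id)

lemma potF_measurable {c : X → Y → ℝ} (hc : Continuous fun p : X × Y => c p.1 p.2)
    (Γ : Set (X × Y)) (z₀ : X × Y) : Measurable (potF c Γ z₀) := by
  apply UpperSemicontinuous.measurable
  refine upperSemicontinuous_iInf fun y => upperSemicontinuous_iInf fun h =>
    Continuous.upperSemicontinuous ?_
  refine continuous_coe_real_ereal.comp (continuous_const.add ?_)
  exact hc.comp (continuous_id.prodMk continuous_const)

lemma potG_ne_bot (c : X → Y → ℝ) (Γ : Set (X × Y)) (z₀ : X × Y) (y : Y) :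
    potG c Γ z₀ y ≠ ⊥ := by
  have : ((0 + c z₀.1 z₀.2 - c z₀.1 y : ℝ) : EReal) ≤ potG c Γ z₀ y :=
    le_iSup_of_le z₀ (le_iSup_of_le 0 (le_iSup_of_le Chain.base le_rfl))
  exact ((EReal.bot_lt_coe _).trans_le this).ne'

lemma potG_ne_top {c : X → Y → ℝ} {Γ : Set (X × Y)} (hΓ : CCyclMonotone c Γ)
    {z₀ : X × Y} (hz : z₀ ∈ Γ) {q : X × Y} (hq : q ∈ Γ) : potG c Γ z₀ q.2 ≠ ⊤ := by
  have : potG c Γ z₀ q.2 ≤ ((c q.1 z₀.2 - c q.1 q.2 : ℝ) : EReal) := by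
    refine iSup_le fun p => iSup_le fun a => iSup_le fun h => ?_
    have := (Chain.step p q a h hq).close hΓ hz
    exact EReal.coe_le_coe_iff.2 (by linarith)
  exact (this.trans_lt (EReal.coe_lt_top _)).ne

lemma potF_eq {c : X → Y → ℝ} {Γ : Set (X × Y)} (hΓ : CCyclMonotone c Γ)
    {z₀ : X × Y} (hz : z₀ ∈ Γ) {q : X × Y} (hq : q ∈ Γ) :
    potF c Γ z₀ q.1 = (((potG c Γ z₀ q.2).toReal + c q.1 q.2 : ℝ) : EReal) := by
  apply le_antisymm
  · exact iInf_le_of_le q.2 (iInf_le_of_le (potG_ne_top hΓ hz hq) le_rfl)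
  · refine le_iInf fun y => le_iInf fun hy => EReal.coe_le_coe_iff.2 ?_
    have hle : potG c Γ z₀ q.2 ≤
        (((potG c Γ z₀ y).toReal + c q.1 y - c q.1 q.2 : ℝ) : EReal) := by
      refine iSup_le fun p => iSup_le fun a => iSup_le fun h => EReal.coe_le_coe_iff.2 ?_
      have h1 : ((a + c p.1 p.2 - c p.1 q.2 + c q.1 q.2 - c q.1 y : ℝ) : EReal) ≤
          potG c Γ z₀ y :=
        le_iSup_of_le q (le_iSup_of_le _ (le_iSup_of_le (Chain.step p q a h hq) le_rfl))
      rw [← EReal.coe_toReal hy (potG_ne_bot c Γ z₀ y)] at h1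
      have := EReal.coe_le_coe_iff.1 h1
      linarith
    rw [← EReal.coe_toReal (potG_ne_top hΓ hz hq) (potG_ne_bot c Γ z₀ q.2)] at hle
    have := EReal.coe_le_coe_iff.1 hle
    linarith

/-- Duality by truncation. -/
lemma cost_le_of_potentials {c : X → Y → ℝ} (hc0 : ∀ x y, 0 ≤ c x y)
    {μ : Measure X} {ν : Measure Y} {π π' : Measure (X × Y)}
    (hπ : IsCoupling μ ν π) (hπ' : IsCoupling μ ν π')
    {f : X → ℝ} {g : Y → ℝ} (hf : Measurable f) (hg : Measurable g)
    (heq : ∀ᵐ z ∂π, f z.1 - g z.2 = c z.1 z.2) (hle : ∀ᵐ z ∂π', f z.1 - g z.2 ≤ c z.1 z.2) :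
    transportCost c π ≤ transportCost c π' := by
  obtain ⟨hp, hπ1, hπ2⟩ := hπ
  obtain ⟨hp', hπ1', hπ2'⟩ := hπ'
  let cl : ℕ → ℝ → ℝ := fun n t => max (-(n : ℝ)) (min t n)
  have clm : ∀ n, Measurable (cl n) := fun n =>
    measurable_const.max (measurable_id.min measurable_const)
  have clb : ∀ n t, ‖cl n t‖ ≤ n := by
    intro n t
    have : (0 : ℝ) ≤ n := Nat.cast_nonneg n
    rw [Real.norm_eq_abs, abs_le]
    exact ⟨le_max_left _ _, max_le (by linarith) (min_le_right _ _)⟩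
  have clmono : ∀ n s t, s ≤ t → cl n s ≤ cl n t := fun n s t h =>
    max_le_max le_rfl (min_le_min h le_rfl)
  have cllip : ∀ n s t, s ≤ t → cl n t - cl n s ≤ t - s := by
    intro n s t h
    simp only [cl]
    rcases max_cases (-(n : ℝ)) (min t n) with h1 | h1 <;>
    rcases max_cases (-(n : ℝ)) (min s n) with h2 | h2 <;>
    rcases min_cases t (n : ℝ) with h3 | h3 <;>
    rcases min_cases s (n : ℝ) with h4 | h4 <;> linarith
  have cllim : ∀ t, Tendsto (fun n => cl n t) atTop (𝓝 t) := by
    intro t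
    apply tendsto_const_nhds.congr'
    obtain ⟨N, hN⟩ := exists_nat_ge |t|
    filter_upwards [eventually_ge_atTop N] with n hn
    have h1 : |t| ≤ n := hN.trans (by exact_mod_cast hn)
    rw [abs_le] at h1
    simp only [cl]
    rw [min_eq_left h1.2, max_eq_right h1.1]
  let h : ℕ → X × Y → ℝ := fun n z => cl n (f z.1) - cl n (g z.2)
  have hfm : ∀ n, Measurable fun z : X × Y => cl n (f z.1) := fun n =>
    (clm n).comp (hf.comp measurable_fst)
  have hgm : ∀ n, Measurable fun z : X × Y => cl n (g z.2) := fun n =>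
    (clm n).comp (hg.comp measurable_snd)
  have hm : ∀ n, Measurable (h n) := fun n => (hfm n).sub (hgm n)
  have intf : ∀ n (m : Measure (X × Y)) [IsProbabilityMeasure m],
      Integrable (fun z : X × Y => cl n (f z.1)) m := fun n m _ =>
    Integrable.of_bound (hfm n).aestronglyMeasurable n (Eventually.of_forall fun z => clb n _)
  have intg : ∀ n (m : Measure (X × Y)) [IsProbabilityMeasure m],
      Integrable (fun z : X × Y => cl n (g z.2)) m := fun n m _ =>
    Integrable.of_bound (hgm n).aestronglyMeasurable n (Eventually.of_forall fun z => clb n _)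
  have key : ∀ n (m : Measure (X × Y)) [IsProbabilityMeasure m], m.map Prod.fst = μ →
      m.map Prod.snd = ν → ∫ z, h n z ∂m = ∫ x, cl n (f x) ∂μ - ∫ y, cl n (g y) ∂ν := by
    intro n m _ h1 h2
    have m1 : Measurable fun x => cl n (f x) := (clm n).comp hf
    have m2 : Measurable fun y => cl n (g y) := (clm n).comp hg
    rw [← h1, ← h2, integral_map measurable_fst.aemeasurable
      m1.aestronglyMeasurable, integral_map measurable_snd.aemeasurable
      m2.aestronglyMeasurable]
    exact integral_sub (intf n m) (intg n m)
  have bound : ∀ n, ∫⁻ z, ENNReal.ofReal (h n z) ∂π ≤ transportCost c π' := by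
    intro n
    have hintπ : Integrable (h n) π := (intf n π).sub (intg n π)
    rw [← ofReal_integral_eq_lintegral_ofReal hintπ]
    · have e : ∫ z, h n z ∂π = ∫ z, h n z ∂π' := by rw [key n π hπ1 hπ2, key n π' hπ1' hπ2']
      change ENNReal.ofReal (∫ z, h n z ∂π) ≤ _
      rw [e]
      have hint : Integrable (h n) π' := (intf n π').sub (intg n π')
      calc ENNReal.ofReal (∫ z, h n z ∂π') ≤ ENNReal.ofReal (∫ z, max (h n z) 0 ∂π') := by
            apply ENNReal.ofReal_le_ofReal
            exact integral_mono hint hint.pos_part (fun z => le_max_left _ _)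
        _ = ∫⁻ z, ENNReal.ofReal (max (h n z) 0) ∂π' :=
            ofReal_integral_eq_lintegral_ofReal hint.pos_part
              (Eventually.of_forall fun z => le_max_right _ _)
        _ ≤ transportCost c π' := by
            apply lintegral_mono_ae
            filter_upwards [hle] with z hz
            apply ENNReal.ofReal_le_ofReal
            apply max_le _ (hc0 _ _)
            rcases le_total (g z.2) (f z.1) with h1 | h1
            · exact (cllip n _ _ h1).trans hz
            · have := clmono n _ _ h1
              have := hc0 z.1 z.2
              simp only [h]; linarith
    · filter_upwards [heq] with z hz
      have h1 := hc0 z.1 z.2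
      have := clmono n (g z.2) (f z.1) (by linarith)
      simp only [Pi.zero_apply, h]
      linarith
  calc transportCost c π = ∫⁻ z, liminf (fun n => ENNReal.ofReal (h n z)) atTop ∂π := by
        apply lintegral_congr_ae
        filter_upwards [heq] with z hz
        symm
        apply Tendsto.liminf_eq
        rw [← hz]
        exact ENNReal.tendsto_ofReal ((cllim _).sub (cllim _))
    _ ≤ liminf (fun n => ∫⁻ z, ENNReal.ofReal (h n z) ∂π) atTop :=
        lintegral_liminf_le fun n => (hm n).ennreal_ofReal
    _ ≤ liminf (fun _ : ℕ => transportCost c π') atTop :=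
        liminf_le_liminf (Eventually.of_forall bound)
    _ = transportCost c π' := liminf_const _

lemma mSupport_ae (π : Measure (X × Y)) : ∀ᵐ z ∂π, z ∈ mSupport π := by
  filter_upwards [Measure.support_mem_ae (μ := π)] with z hz U hU hzU
  exact (Measure.mem_support_iff_forall z).1 hz U (hU.mem_nhds hzU)

lemma optimal_of_cycl {c : X → Y → ℝ} (hc : Continuous fun p : X × Y => c p.1 p.2)
    (hc0 : ∀ x y, 0 ≤ c x y) {μ : Measure X} {ν : Measure Y} {π π' : Measure (X × Y)}
    (hπ : IsCoupling μ ν π) (hπ' : IsCoupling μ ν π')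
    (hΓ : CCyclMonotone c (mSupport π)) : transportCost c π ≤ transportCost c π' := by
  have := hπ.1
  obtain ⟨z₀, hz⟩ := (mSupport_ae π).exists
  set Γ := mSupport π
  have hGm := potG_measurable hc Γ z₀
  have hFm := potF_measurable hc Γ z₀
  have hG : ∀ᵐ y ∂ν, potG c Γ z₀ y ≠ ⊤ := by
    have hms : MeasurableSet {y | potG c Γ z₀ y ≠ ⊤} :=
      hGm (measurableSet_singleton ⊤).compl
    rw [← hπ.2.2, ae_map_iff measurable_snd.aemeasurable hms]
    filter_upwards [mSupport_ae π] with q hq using potG_ne_top hΓ hz hq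
  have hF : ∀ᵐ x ∂μ, potF c Γ z₀ x ≠ ⊥ := by
    have hms : MeasurableSet {x | potF c Γ z₀ x ≠ ⊥} :=
      hFm (measurableSet_singleton ⊥).compl
    rw [← hπ.2.1, ae_map_iff measurable_fst.aemeasurable hms]
    filter_upwards [mSupport_ae π] with q hq
    rw [potF_eq hΓ hz hq]
    exact EReal.coe_ne_bot _
  refine cost_le_of_potentials hc0 hπ hπ' hFm.ereal_toReal hGm.ereal_toReal ?_ ?_
  · filter_upwards [mSupport_ae π] with q hq
    rw [potF_eq hΓ hz hq, EReal.toReal_coe]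
    ring
  · have hG' : ∀ᵐ z ∂π', potG c Γ z₀ z.2 ≠ ⊤ := by
      rw [← hπ'.2.2] at hG
      exact ae_of_ae_map measurable_snd.aemeasurable hG
    have hF' : ∀ᵐ z ∂π', potF c Γ z₀ z.1 ≠ ⊥ := by
      rw [← hπ'.2.1] at hF
      exact ae_of_ae_map measurable_fst.aemeasurable hF
    filter_upwards [hG', hF'] with z h1 h2
    have hle : potF c Γ z₀ z.1 ≤ (((potG c Γ z₀ z.2).toReal + c z.1 z.2 : ℝ) : EReal) :=
      iInf_le_of_le z.2 (iInf_le_of_le h1 le_rfl)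
    have := EReal.toReal_le_toReal hle h2 (EReal.coe_ne_top _)
    rw [EReal.toReal_coe] at this
    linarith

/-- weak cluster points of `π_ε` have `c`-cyclically monotone support, are optimal
transports when the problem is finite, and the whole family converges when the `c`-cyclically
monotone coupling is unique. -/
theorem stmt3 (μ : Measure X) (ν : Measure Y)
    [IsProbabilityMeasure μ] [IsProbabilityMeasure ν]
    (c : X → Y → ℝ) (hc : Continuous fun p : X × Y => c p.1 p.2) (hc0 : ∀ x y, 0 ≤ c x y)
    (πε : ℝ → Measure (X × Y)) [∀ ε, IsProbabilityMeasure (πε ε)]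
    (hπε : ∀ ε, 0 < ε → IsCyclInvariant c ε μ ν (πε ε))
    (π : Measure (X × Y)) [IsProbabilityMeasure π]
    (hclust : ∃ εn : ℕ → ℝ, (∀ n, 0 < εn n) ∧ Tendsto εn atTop (𝓝 0) ∧
      ∀ f : BoundedContinuousFunction (X × Y) ℝ,
        Tendsto (fun n => ∫ z, f z ∂(πε (εn n))) atTop (𝓝 (∫ z, f z ∂π))) :
    CCyclMonotone c (mSupport π) ∧
    ((∃ π', IsCoupling μ ν π' ∧ transportCost c π' ≠ ⊤) →
      IsCoupling μ ν π ∧ ∀ π', IsCoupling μ ν π' → transportCost c π ≤ transportCost c π') ∧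
    ((∃! πs : Measure (X × Y), IsCoupling μ ν πs ∧ CCyclMonotone c (mSupport πs)) →
      ∀ πs, IsCoupling μ ν πs → CCyclMonotone c (mSupport πs) → TendstoWeakly πε πs) := by
  set P : ℝ → ProbabilityMeasure (X × Y) := fun ε => ⟨πε ε, inferInstance⟩ with hP
  have hPc : ∀ ε, 0 < ε → IsCyclInvariant c ε μ ν (P ε : Measure (X × Y)) := hπε
  have hPp : ∀ ε, 0 < ε → IsCoupling μ ν (P ε : Measure (X × Y)) := fun ε h => (hπε ε h).1
  obtain ⟨εn, hpos, hto, hconv⟩ := hclust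
  let Q : ProbabilityMeasure (X × Y) := ⟨π, inferInstance⟩
  have hl : map εn atTop ≤ 𝓝[>] (0 : ℝ) :=
    tendsto_nhdsWithin_iff.2 ⟨hto, Eventually.of_forall hpos⟩
  have hlim : Tendsto P (map εn atTop) (𝓝 Q) := by
    rw [tendsto_map'_iff]
    exact ProbabilityMeasure.tendsto_iff_forall_integral_tendsto.2 hconv
  have hcyc : CCyclMonotone c (mSupport π) := cycl_of_tendsto hc hPc hl hlim
  have hcoup : IsCoupling μ ν π := coupling_of_tendsto hPp hl hlim
  refine ⟨hcyc, fun _ => ⟨hcoup, fun π' hπ' => optimal_of_cycl hc hc0 hcoup hπ' hcyc⟩, ?_⟩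
  intro huniq πs hs1 hs2
  have hsp := hs1.1
  let S : ProbabilityMeasure (X × Y) := ⟨πs, hsp⟩
  let K : Set (ProbabilityMeasure (X × Y)) := {m | IsCoupling μ ν (m : Measure (X × Y))}
  have hK : IsCompact (closure K) := by
    apply isCompact_closure_of_isTightMeasureSet
    apply IsTightMeasureSet.prodMk
    · refine (isTightMeasureSet_singleton (μ := μ)).subset ?_
      rintro _ ⟨_, ⟨m, hm, rfl⟩, rfl⟩
      exact hm.2.1
    · refine (isTightMeasureSet_singleton (μ := ν)).subset ?_
      rintro _ ⟨_, ⟨m, hm, rfl⟩, rfl⟩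
      exact hm.2.2
  have hT : Tendsto P (𝓝[>] (0 : ℝ)) (𝓝 S) := by
    refine hK.tendsto_nhds_of_unique_mapClusterPt ?_ ?_
    · filter_upwards [self_mem_nhdsWithin] with ε hε
      exact subset_closure (hPp ε hε)
    · intro m _ hm
      obtain ⟨U, hU, hUm⟩ := mapClusterPt_iff_ultrafilter.1 hm
      have h1 := cycl_of_tendsto hc hPc hU hUm
      have h2 := coupling_of_tendsto hPp hU hUm
      exact Subtype.ext (huniq.unique ⟨h2, h1⟩ ⟨hs1, hs2⟩)
  exact ProbabilityMeasure.tendsto_iff_forall_integral_tendsto.1 hT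

end Statement

end EOT
end
end

section
/- Let (x,y) ∈ X×Y and suppose there exist k ≥ 2 and points (x_2,y_2),…,(x_k,y_k) in the support of π_* such that δ_0 := Σ_{i=1}^k c(x_i,y_i) − Σ_{i=1}^k c(x_i,y_{i+1}) > 0, where (x_1,y_1) := (x,y) and y_{k+1} := y_1. Then for every δ < δ_0 there exist α, r, ε_0 > 0 such that π_ε(B_r(x,y)) ≤ α e^{−δ/ε} for all ε ≤ ε_0. -/
open MeasureTheory Filter Topology Set
open scoped ENNReal

noncomputable section

namespace EOT

variable {X Y : Type*}

section Helpers

variable {X Y : Type*} [MeasurableSpace X] [MeasurableSpace Y]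

theorem aux_lintegral_prod {Z : Type*} [MeasurableSpace Z] {n : ℕ} (P : Measure Z)
    [IsProbabilityMeasure P] (f : Fin n → Z → ℝ≥0∞) (hf : ∀ i, Measurable (f i)) :
    ∫⁻ q, ∏ i, f i (q i) ∂(Measure.pi fun _ : Fin n => P) = ∏ i, ∫⁻ z, f i z ∂P := by
  have hind : ProbabilityTheory.iIndepFun (fun i (q : Fin n → Z) => f i (q i))
      (Measure.pi fun _ : Fin n => P) :=
    ProbabilityTheory.iIndepFun_pi (fun i => (hf i).aemeasurable)
  have h := ProbabilityTheory.lintegral_prod_eq_prod_lintegral_of_indepFun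
    Finset.univ (fun i (q : Fin n → Z) => f i (q i)) hind (fun i => (hf i).comp (measurable_pi_apply i))
  rw [h]
  refine Finset.prod_congr rfl fun i _ => ?_
  exact (measurePreserving_eval (fun _ : Fin n => P) i).lintegral_comp (hf i)

theorem aux_shift {n : ℕ} (μ : Measure X) (ν : Measure Y)
    [IsProbabilityMeasure μ] [IsProbabilityMeasure ν] :
    MeasurePreserving (fun (q : Fin (n + 1) → X × Y) i => ((q i).1, (q (i + 1)).2))
      (Measure.pi fun _ => μ.prod ν) (Measure.pi fun _ => μ.prod ν) := by
  have h1 := measurePreserving_arrowProdEquivProdArrow X Y (Fin (n + 1))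
    (fun _ => μ) (fun _ => ν)
  have h2 := measurePreserving_arrowCongr' (fun _ : Fin (n + 1) => ν) (fun _ : Fin (n + 1) => ν)
    (Equiv.addRight (1 : Fin (n + 1))).symm (MeasurableEquiv.refl Y)
    (fun _ => MeasurePreserving.id ν)
  have h3 := (MeasurePreserving.id (Measure.pi fun _ : Fin (n + 1) => μ)).prod h2
  exact (h1.symm.comp h3).comp h1

theorem aux_main {c : X → Y → ℝ} {ε δ : ℝ} (hε : 0 < ε) (μ : Measure X) (ν : Measure Y)
    [IsProbabilityMeasure μ] [IsProbabilityMeasure ν] (π : Measure (X × Y))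
    (hπ : IsCyclInvariant c ε μ ν π) {n : ℕ} (U : Fin (n + 1) → Set (X × Y))
    (hU : ∀ i, MeasurableSet (U i))
    (hδ : ∀ q : Fin (n + 1) → X × Y, (∀ i, q i ∈ U i) →
      δ ≤ (∑ i, c (q i).1 (q i).2) - ∑ i, c (q i).1 (q (i + 1)).2) :
    ∏ i, π (U i) ≤ ENNReal.ofReal (Real.exp (-δ / ε)) := by
  obtain ⟨⟨hprob, -, -⟩, D, hDm, hDpos, hπD, hcyc⟩ := hπ
  set d : X × Y → ℝ≥0∞ := fun z => ENNReal.ofReal (D z) with hd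
  have hdm : Measurable d := hDm.ennreal_ofReal
  have hone : ∫⁻ z, d z ∂(μ.prod ν) = 1 := by
    have := hprob.measure_univ
    rw [hπD, withDensity_apply _ MeasurableSet.univ, setLIntegral_univ] at this
    exact this
  have hUi : ∀ i, π (U i) = ∫⁻ z, (U i).indicator d z ∂(μ.prod ν) := by
    intro i
    rw [lintegral_indicator (hU i), ← withDensity_apply _ (hU i), ← hπD]
  simp_rw [hUi]
  rw [← aux_lintegral_prod (μ.prod ν) (fun i => (U i).indicator d)
    (fun i => hdm.indicator (hU i))]
  have hF : Measurable fun q : Fin (n + 1) → X × Y => ∏ i, d (q i) := by fun_prop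
  calc _ ≤ ∫⁻ q : Fin (n + 1) → X × Y, ENNReal.ofReal (Real.exp (-δ / ε)) *
        ∏ i, d ((q i).1, (q (i + 1)).2) ∂(Measure.pi fun _ => μ.prod ν) := by
        refine lintegral_mono fun q => ?_
        by_cases hq : ∀ i, q i ∈ U i
        · have e1 : ∏ i, (U i).indicator d (q i) = ∏ i, d (q i) :=
            Finset.prod_congr rfl fun i _ => indicator_of_mem (hq i) d
          refine e1.trans_le ?_
          simp only [hd]
          rw [← ENNReal.ofReal_prod_of_nonneg (fun i _ => (hDpos _).le),
            ← ENNReal.ofReal_prod_of_nonneg (fun i _ => (hDpos _).le),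
            ← ENNReal.ofReal_mul (Real.exp_pos _).le]
          refine ENNReal.ofReal_le_ofReal ?_
          have := hcyc n (fun i => (q i).1) (fun i => (q i).2)
          simp only [Prod.mk.eta] at this
          rw [this]
          refine mul_le_mul_of_nonneg_right (Real.exp_le_exp.2 ?_)
            (Finset.prod_nonneg fun i _ => (hDpos _).le)
          have := mul_le_mul_of_nonneg_left (hδ q hq) (one_div_pos.2 hε).le
          have e : -δ / ε = -(1 / ε * δ) := by ring
          rw [e, neg_mul]
          linarith
        · push Not at hq
          obtain ⟨i, hi⟩ := hq
          have : ∏ i, (U i).indicator d (q i) = 0 :=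
            Finset.prod_eq_zero (Finset.mem_univ i) (indicator_of_notMem hi d)
          simp only [this]
          exact zero_le
    _ = ENNReal.ofReal (Real.exp (-δ / ε)) *
        ∫⁻ q : Fin (n + 1) → X × Y, ∏ i, d (q i) ∂(Measure.pi fun _ => μ.prod ν) := by
        rw [lintegral_const_mul' _ _ ENNReal.ofReal_ne_top]
        congr 1
        exact (aux_shift μ ν).lintegral_comp hF
    _ = ENNReal.ofReal (Real.exp (-δ / ε)) := by
        rw [aux_lintegral_prod (μ.prod ν) (fun _ => d) (fun _ => hdm)]
        simp [hone]

theorem aux_open {Z : Type*} [MeasurableSpace Z] [MetricSpace Z] [BorelSpace Z]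
    (πε : ℝ → Measure Z) [∀ ε, IsProbabilityMeasure (πε ε)] (πs : Measure Z)
    [IsProbabilityMeasure πs] (hconv : TendstoWeakly πε πs) (U : Set Z) (hU : IsOpen U)
    (h0 : 0 < πs U) : ∀ᶠ ε in 𝓝[>] (0 : ℝ), πs U / 2 ≤ πε ε U := by
  let ρ : ℝ → ProbabilityMeasure Z := fun ε => ⟨πε ε, inferInstance⟩
  let ρs : ProbabilityMeasure Z := ⟨πs, inferInstance⟩
  have ht : Tendsto ρ (𝓝[>] (0 : ℝ)) (𝓝 ρs) :=
    ProbabilityMeasure.tendsto_iff_forall_integral_tendsto.2 hconv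
  have h := ProbabilityMeasure.le_liminf_measure_open_of_tendsto ht hU
  have h2 : πs U / 2 < πs U := ENNReal.half_lt_self h0.ne' (measure_ne_top _ _)
  filter_upwards [eventually_lt_of_lt_liminf (lt_of_lt_of_le h2 h)] with ε hε
  exact hε.le

end Helpers

section Statement

variable {X Y : Type*}
  [MeasurableSpace X] [MetricSpace X] [PolishSpace X] [BorelSpace X]
  [MeasurableSpace Y] [MetricSpace Y] [PolishSpace Y] [BorelSpace Y]

/-- exponential decay of the mass of a small ball around a point improving on `Γ`. -/
theorem stmt4 (μ : Measure X) (ν : Measure Y)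
    [IsProbabilityMeasure μ] [IsProbabilityMeasure ν]
    (c : X → Y → ℝ) (hc : Continuous fun p : X × Y => c p.1 p.2) (hc0 : ∀ x y, 0 ≤ c x y)
    (πε : ℝ → Measure (X × Y)) [∀ ε, IsProbabilityMeasure (πε ε)]
    (hπε : ∀ ε, 0 < ε → IsCyclInvariant c ε μ ν (πε ε))
    (πs : Measure (X × Y)) (hπs : IsCoupling μ ν πs) (hconv : TendstoWeakly πε πs)
    (x : X) (y : Y) (k : ℕ) (p : Fin (k + 2) → X × Y)
    (hp0 : p 0 = (x, y)) (hpΓ : ∀ i, i ≠ 0 → p i ∈ mSupport πs)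
    (δ₀ : ℝ) (hδ₀ : δ₀ = (∑ i, c (p i).1 (p i).2) - ∑ i, c (p i).1 (p (i + 1)).2)
    (hδ₀pos : 0 < δ₀) (δ : ℝ) (hδ : δ < δ₀) :
    ∃ α > (0 : ℝ), ∃ r > (0 : ℝ), ∃ ε₀ > (0 : ℝ), ∀ ε, 0 < ε → ε ≤ ε₀ →
      πε ε (Metric.ball (x, y) r) ≤ ENNReal.ofReal (α * Real.exp (-δ / ε)) := by
  have := hπs.1
  have hcont : Continuous fun q : Fin (k + 2) → X × Y =>
      (∑ i, c (q i).1 (q i).2) - ∑ i, c (q i).1 (q (i + 1)).2 := by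
    refine Continuous.sub (continuous_finsetSum _ fun i _ => ?_)
      (continuous_finsetSum _ fun i _ => ?_)
    · exact hc.comp (continuous_apply i)
    · exact hc.comp (f := fun q : Fin (k + 2) → X × Y => ((q i).1, (q (i + 1)).2)) (by fun_prop)
  have hev : ∀ᶠ q in 𝓝 p, δ < (∑ i, c (q i).1 (q i).2) - ∑ i, c (q i).1 (q (i + 1)).2 :=
    hcont.continuousAt.eventually (lt_mem_nhds (hδ.trans_eq hδ₀))
  obtain ⟨r, hr, hball⟩ := Metric.eventually_nhds_iff_ball.1 hev
  have hs : ∀ j : Fin (k + 1), 0 < πs (Metric.ball (p j.succ) r) := fun j =>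
    hpΓ _ (Fin.succ_ne_zero j) _ Metric.isOpen_ball (Metric.mem_ball_self hr)
  have hev2 : ∀ᶠ ε in 𝓝[>] (0 : ℝ), ∀ j : Fin (k + 1),
      πs (Metric.ball (p j.succ) r) / 2 ≤ πε ε (Metric.ball (p j.succ) r) :=
    eventually_all.2 fun j => aux_open πε πs hconv _ Metric.isOpen_ball (hs j)
  obtain ⟨ε₀, hε₀, hsub⟩ := mem_nhdsGT_iff_exists_Ioc_subset.1 hev2
  set b : ℝ≥0∞ := ∏ j : Fin (k + 1), πs (Metric.ball (p j.succ) r) / 2 with hb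
  have hb0 : b ≠ 0 := Finset.prod_ne_zero_iff.2 fun j _ => by
    simpa using (hs j).ne'
  have hbt : b ≠ ∞ := ENNReal.prod_ne_top fun j _ =>
    ENNReal.div_ne_top (measure_ne_top _ _) (by simp)
  refine ⟨b.toReal⁻¹, inv_pos.2 (ENNReal.toReal_pos hb0 hbt), r, hr, ε₀, hε₀, fun ε hε hle => ?_⟩
  have hlow := hsub ⟨hε, hle⟩
  have hmain := aux_main (δ := δ) hε μ ν (πε ε) (hπε ε hε) (n := k + 1)
    (fun i => Metric.ball (p i) r) (fun i => Metric.isOpen_ball.measurableSet)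
    (fun q hq => (hball q (by
      rw [ball_pi _ hr]
      exact fun i _ => hq i)).le)
  rw [Fin.prod_univ_succ, hp0] at hmain
  have h3 : πε ε (Metric.ball (x, y) r) * b ≤ ENNReal.ofReal (Real.exp (-δ / ε)) :=
    le_trans (mul_le_mul_right (Finset.prod_le_prod' fun j _ => hlow j) _) hmain
  rw [mul_comm, ENNReal.ofReal_mul (Real.exp_pos _).le,
    ENNReal.ofReal_inv_of_pos (ENNReal.toReal_pos hb0 hbt), ENNReal.ofReal_toReal hbt,
    ← div_eq_mul_inv]
  exact (ENNReal.le_div_iff_mul_le (Or.inl hb0) (Or.inl hbt)).2 h3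

end Statement

end EOT
end
end

section
/- Let Γ ⊂ X×Y be a nonempty c-cyclically monotone set and define I(x,y) := sup_{k≥2} sup_{(x_i,y_i)_{i=2}^k ⊂ Γ} sup_{σ ∈ Σ(k)} [Σ_{i=1}^k c(x_i,y_i) − Σ_{i=1}^k c(x_i,y_{σ(i)})], where (x_1,y_1) := (x,y) and Σ(k) is the set of permutations of {1,…,k}. Then I: X×Y → [0,∞] is lower semicontinuous, I = 0 on Γ, and I(x,y) ≥ sup_{k≥2} sup_{(x_i,y_i)_{i=2}^k ⊂ Γ} [Σ_{i=1}^k c(x_i,y_i) − Σ_{i=1}^k c(x_i,y_{i+1})] (with y_{k+1} := y_1), with equality as soon as x ∈ proj_X Γ or y ∈ proj_Y Γ. -/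
open MeasureTheory Filter Topology Set
open scoped ENNReal

noncomputable section

namespace EOT

variable {X Y : Type*}

/-- A closed chain indexed by `ℕ` rewritten as a cyclic sum over `Fin`. -/
theorem aux_range_fin (d : X × Y → X × Y → ℝ) (f : ℕ → X × Y) (m : ℕ) (h : f (m + 1) = f 0) :
    ∑ j ∈ Finset.range (m + 1), d (f j) (f (j + 1)) =
      ∑ i : Fin (m + 1), d (f i) (f ((i + 1 : Fin (m + 1)) : ℕ)) := by
  rw [Finset.sum_range, Fin.sum_univ_castSucc, Fin.sum_univ_castSucc]
  congr 1
  · apply Finset.sum_congr rfl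
    intro i _
    rw [Fin.coeSucc_eq_succ]
    simp
  · simp [h]

theorem aux_chain (c : X → Y → ℝ) (Γ : Set (X × Y)) (hΓ : CCyclMonotone c Γ)
    (f : ℕ → X × Y) (hf : ∀ j, f j ∈ Γ) (m : ℕ) (h : f m = f 0) :
    ∑ j ∈ Finset.range m, (c (f j).1 (f j).2 - c (f j).1 (f (j + 1)).2) ≤ 0 := by
  cases m with
  | zero => simp
  | succ m =>
    rw [aux_range_fin (fun a b => c a.1 a.2 - c a.1 b.2) f m h]
    have := hΓ m (fun i => f i) (fun i => hf _)
    simp only [Finset.sum_sub_distrib]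
    linarith

theorem aux_perm (c : X → Y → ℝ) (Γ : Set (X × Y)) (hΓ : CCyclMonotone c Γ) {ι : Type*}
    [Fintype ι] [DecidableEq ι]
    (σ : Equiv.Perm ι) (p : ι → X × Y) (S : Finset ι) (hS : ∀ i, σ i ∈ S ↔ i ∈ S)
    (hp : ∀ i ∈ S, p i ∈ Γ) :
    ∑ i ∈ S, (c (p i).1 (p i).2 - c (p i).1 (p (σ i)).2) ≤ 0 := by
  set g : ι → ℝ := fun i => c (p i).1 (p i).2 - c (p i).1 (p (σ i)).2 with hg
  have hSj : ∀ (j : ℕ) i, (σ ^ j) i ∈ S ↔ i ∈ S := by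
    intro j
    induction j with
    | zero => simp
    | succ j ih => intro i; rw [pow_succ', Equiv.Perm.mul_apply, hS, ih]
  have h1 : ∀ j : ℕ, ∑ i ∈ S, g ((σ ^ j) i) = ∑ i ∈ S, g i := by
    intro j
    exact Finset.sum_equiv (σ ^ j) (fun i => (hSj j i).symm) (fun i _ => rfl)
  have h2 : ∀ i ∈ S, ∑ j ∈ Finset.range (orderOf σ), g ((σ ^ j) i) ≤ 0 := by
    intro i hi
    have := aux_chain c Γ hΓ (fun j => p ((σ ^ j) i)) (fun j => hp _ ((hSj j i).2 hi)) (orderOf σ)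
      (by simp [pow_orderOf_eq_one])
    simpa [hg, pow_succ'] using this
  have h3 : ∑ j ∈ Finset.range (orderOf σ), ∑ i ∈ S, g ((σ ^ j) i) ≤ 0 := by
    rw [Finset.sum_comm]
    exact Finset.sum_nonpos h2
  simp only [h1, Finset.sum_const, Finset.card_range, nsmul_eq_mul] at h3
  have : (0 : ℝ) < orderOf σ := by exact_mod_cast orderOf_pos σ
  by_contra hcon
  push Not at hcon
  have := mul_pos this hcon
  linarith

theorem aux_orbit {n : ℕ} (σ : Equiv.Perm (Fin (n + 1))) (g : Fin (n + 1) → ℝ) :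
    ∃ m : ℕ, (σ ^ (m + 1)) 0 = 0 ∧ (∀ j, 0 < j → j < m + 1 → (σ ^ j) 0 ≠ 0) ∧
      ∑ i ∈ (Finset.univ.filter fun i => σ.SameCycle 0 i), g i =
        ∑ j ∈ Finset.range (m + 1), g ((σ ^ j) 0) := by
  have hper : Function.minimalPeriod σ 0 ≠ 0 := by
    apply ne_of_gt
    apply Function.IsPeriodicPt.minimalPeriod_pos (orderOf_pos σ)
    change (σ^[orderOf σ]) 0 = 0
    rw [← Equiv.Perm.coe_pow, pow_orderOf_eq_one]; rfl
  obtain ⟨m, hm⟩ := Nat.exists_eq_succ_of_ne_zero hper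
  have hcl : (σ ^ (m + 1)) 0 = 0 := by
    have := Function.isPeriodicPt_minimalPeriod σ 0
    rw [hm] at this
    rw [Equiv.Perm.coe_pow]; exact this
  refine ⟨m, hcl, ?_, ?_⟩
  · intro j hj hjm h
    have : Function.IsPeriodicPt σ j 0 := by
      change (σ^[j]) 0 = 0
      rw [← Equiv.Perm.coe_pow]; exact h
    have := this.minimalPeriod_le hj
    omega
  · symm
    apply Finset.sum_bij (fun j _ => (σ ^ j) 0)
    · intro j _
      simp only [Finset.mem_filter, Finset.mem_univ, true_and]
      exact ⟨j, by simp⟩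
    · intro a ha b hb hab
      have := Function.iterate_injOn_Iio_minimalPeriod (f := σ) (x := 0)
      refine this (by simpa [hm] using ha) (by simpa [hm] using hb) ?_
      simpa [Equiv.Perm.coe_pow] using hab
    · intro b hb
      simp only [Finset.mem_filter, Finset.mem_univ, true_and] at hb
      obtain ⟨i, hi⟩ := hb.exists_nat_pow_eq
      refine ⟨i % (m + 1), Finset.mem_range.2 (Nat.mod_lt _ (Nat.succ_pos _)), ?_⟩
      have h3 := Function.iterate_mod_minimalPeriod_eq (f := σ) (x := 0) (n := i)
      rw [hm] at h3
      rw [← hi, Equiv.Perm.coe_pow, Equiv.Perm.coe_pow]; exact h3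
    · intros; rfl

theorem aux_le_rateI (c : X → Y → ℝ) (Γ : Set (X × Y)) (k : ℕ) (p : Fin (k + 2) → X × Y)
    (hp : ∀ i, i ≠ 0 → p i ∈ Γ) (σ : Equiv.Perm (Fin (k + 2))) :
    (((∑ i, c (p i).1 (p i).2) - ∑ i, c (p i).1 (p (σ i)).2 : ℝ) : EReal) ≤ rateI c Γ (p 0) := by
  unfold rateI
  exact le_iSup_of_le k (le_iSup_of_le p (le_iSup_of_le rfl (le_iSup_of_le hp
    (le_iSup_of_le σ le_rfl))))

theorem aux_le_rateICyc (c : X → Y → ℝ) (Γ : Set (X × Y)) (k : ℕ) (p : Fin (k + 2) → X × Y)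
    (hp : ∀ i, i ≠ 0 → p i ∈ Γ) :
    (((∑ i, c (p i).1 (p i).2) - ∑ i, c (p i).1 (p (i + 1)).2 : ℝ) : EReal)
      ≤ rateICyc c Γ (p 0) := by
  unfold rateICyc
  exact le_iSup_of_le k (le_iSup_of_le p (le_iSup_of_le rfl (le_iSup_of_le hp le_rfl)))

theorem aux_cyc_nonneg (c : X → Y → ℝ) (Γ : Set (X × Y)) (z : X × Y)
    (hz : z.1 ∈ Prod.fst '' Γ ∨ z.2 ∈ Prod.snd '' Γ) : 0 ≤ rateICyc c Γ z := by
  have key : ∀ w ∈ Γ, (w.1 = z.1 ∨ w.2 = z.2) → 0 ≤ rateICyc c Γ z := by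
    intro w hw h
    have := aux_le_rateICyc c Γ 0 ![z, w] (by
      intro i hi
      fin_cases i
      · simp at hi
      · simpa using hw)
    refine le_trans (le_of_eq ?_) this
    rw [← EReal.coe_zero]
    congr 1
    rcases h with h | h <;> simp [Fin.sum_univ_two, h] <;> ring
  rcases hz with ⟨w, hw, h⟩ | ⟨w, hw, h⟩
  · exact key w hw (Or.inl h)
  · exact key w hw (Or.inr h)

theorem aux_le_cyc (c : X → Y → ℝ) (Γ : Set (X × Y)) (hΓ : CCyclMonotone c Γ) (z : X × Y)
    (hz : 0 ≤ rateICyc c Γ z) : rateI c Γ z ≤ rateICyc c Γ z := by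
  conv_lhs => unfold rateI
  refine iSup_le fun k => iSup_le fun p => iSup_le fun h0 => iSup_le fun hp => iSup_le fun σ => ?_
  rw [← Finset.sum_sub_distrib, ← Finset.sum_filter_add_sum_filter_not Finset.univ
    (fun i => σ.SameCycle 0 i)]
  have hB := aux_perm c Γ hΓ σ p (Finset.univ.filter fun i => ¬ σ.SameCycle 0 i)
    (by intro i; simp) (by
      intro i hi
      apply hp
      rintro rfl
      simp at hi
      exact hi (Equiv.Perm.SameCycle.refl σ 0))
  obtain ⟨m, hm, hne, hs⟩ := aux_orbit σ (fun i => c (p i).1 (p i).2 - c (p i).1 (p (σ i)).2)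
  rw [hs]
  have hle : ∀ a b : ℝ, b ≤ 0 → (a : EReal) ≤ rateICyc c Γ z →
      ((a + b : ℝ) : EReal) ≤ rateICyc c Γ z := by
    intro a b hb ha
    exact le_trans (EReal.coe_le_coe_iff.2 (by linarith)) ha
  apply hle _ _ hB
  cases m with
  | zero =>
    have : σ 0 = 0 := by simpa using hm
    simpa [this] using hz
  | succ m =>
    have e := aux_range_fin (fun a b => c a.1 a.2 - c a.1 b.2) (fun j => p ((σ ^ j) 0)) (m + 1)
      (by simp only [hm, pow_zero, Equiv.Perm.one_apply])
    simp only [pow_succ', Equiv.Perm.mul_apply] at e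
    rw [e, Finset.sum_sub_distrib]
    have := aux_le_rateICyc c Γ m (fun i => p ((σ ^ (i : ℕ)) 0)) (by
      intro i hi
      apply hp
      apply hne _ _ i.isLt
      exact Nat.pos_of_ne_zero (fun h => hi (Fin.ext h)))
    simpa [h0] using this

section Statement

variable {X Y : Type*} [TopologicalSpace X] [TopologicalSpace Y]

/-- basic properties of the rate function `I`. -/
theorem stmt5 (c : X → Y → ℝ) (hc : Continuous fun p : X × Y => c p.1 p.2)
    (hc0 : ∀ x y, 0 ≤ c x y)
    (Γ : Set (X × Y)) (hΓne : Γ.Nonempty) (hΓ : CCyclMonotone c Γ) :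
    (∀ z, 0 ≤ rateI c Γ z) ∧
    LowerSemicontinuous (rateI c Γ) ∧
    (∀ z ∈ Γ, rateI c Γ z = 0) ∧
    (∀ z, rateICyc c Γ z ≤ rateI c Γ z) ∧
    (∀ z : X × Y, z.1 ∈ Prod.fst '' Γ ∨ z.2 ∈ Prod.snd '' Γ →
      rateI c Γ z = rateICyc c Γ z) := by
  have hnn : ∀ z, 0 ≤ rateI c Γ z := by
    intro z
    obtain ⟨w, hw⟩ := hΓne
    have := aux_le_rateI c Γ 0 ![z, w] (by
      intro i hi
      fin_cases i
      · simp at hi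
      · simpa using hw) 1
    simpa using this
  have hcyc : ∀ z, rateICyc c Γ z ≤ rateI c Γ z := by
    intro z
    conv_lhs => unfold rateICyc
    refine iSup_le fun k => iSup_le fun p => iSup_le fun h0 => iSup_le fun hp => ?_
    have := aux_le_rateI c Γ k p hp (Equiv.addRight 1)
    rw [h0] at this
    simpa using this
  refine ⟨hnn, ?_, ?_, hcyc, ?_⟩
  · intro z a ha
    have ha' := ha
    unfold rateI at ha'
    simp only [lt_iSup_iff] at ha'
    obtain ⟨k, p, h0, hp, σ, h⟩ := ha'
    let F : X × Y → ℝ := fun w => (∑ i, c (Function.update p 0 w i).1 (Function.update p 0 w i).2) -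
      ∑ i, c (Function.update p 0 w i).1 (Function.update p 0 w (σ i)).2
    have hup : ∀ i, Continuous fun w : X × Y => Function.update p 0 w i := by
      intro i
      by_cases hi : i = 0
      · subst hi
        simpa only [Function.update_self] using continuous_id'
      · simpa only [Function.update_of_ne hi] using continuous_const
    have hF : Continuous F := by
      refine Continuous.sub (continuous_finsetSum _ fun i _ => ?_)
        (continuous_finsetSum _ fun i _ => ?_)
      · exact hc.comp (hup i)
      · exact hc.comp ((hup i).fst.prodMk (hup (σ i)).snd)
    have hF' : Continuous fun w => ((F w : ℝ) : EReal) := continuous_coe_real_ereal.comp hF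
    have hFz : a < ((F z : ℝ) : EReal) := by
      have : Function.update p 0 z = p := by rw [← h0, Function.update_eq_self]
      simpa only [F, this] using h
    filter_upwards [hF'.continuousAt.eventually (lt_mem_nhds hFz)] with w hw
    refine lt_of_lt_of_le hw ?_
    have := aux_le_rateI c Γ k (Function.update p 0 w) (by
      intro i hi
      rw [Function.update_of_ne hi]
      exact hp i hi) σ
    rwa [Function.update_self] at this
  · intro z hz
    refine le_antisymm ?_ (hnn z)
    unfold rateI
    refine iSup_le fun k => iSup_le fun p => iSup_le fun h0 => iSup_le fun hp => iSup_le fun σ => ?_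
    have := aux_perm c Γ hΓ σ p Finset.univ (by simp) (by
      intro i _
      by_cases hi : i = 0
      · rw [hi, h0]; exact hz
      · exact hp i hi)
    rw [Finset.sum_sub_distrib] at this
    exact_mod_cast this
  · intro z hz
    exact le_antisymm (aux_le_cyc c Γ hΓ z (aux_cyc_nonneg c Γ z hz)) (hcyc z)

end Statement

end EOT
end
end
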